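/- Let γ ≥ 1 and n be integers with n ≥ 3γ + 2. For every connected nonbipartite graph G of order n with domination number γ, one has q_min(C*_{3,3γ−3}) ≤ q_min(G), where C*_{3,3γ−3} has order n, and equality holds if and only if G is isomorphic to C*_{3,3γ−3}. -/

import Mathlib

open scoped Classical

/-- `D` is a dominating set of `G`: every vertex not in `D` is adjacent to a vertex of `D`. -/
def IsDominatingSet {V : Type*} [Fintype V] (G : SimpleGraph V) (D : Finset V) : Prop :=
  ∀ v, v ∉ D → ∃ u ∈ D, G.Adj u v

/-- The domination number of `G`: minimum cardinality of a dominating set. -/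
noncomputable def dominationNumber {V : Type*} [Fintype V] (G : SimpleGraph V) : ℕ :=
  sInf {k | ∃ D : Finset V, IsDominatingSet G D ∧ D.card = k}

/-- Edge relation for the graph `C*_{s,l}` on vertex indices `0, …, n-1`:
vertices `0, …, s-1` form a cycle `C_s` (with `0` playing the role of `v_1`);
vertices `0, s, s+1, …, s+l-1` form a path of length `l` hanging at `0`;
and all remaining vertices `s+l, …, n-1` are pendant vertices attached to the
other end of the path (to `0` itself when `l = 0`). -/
def cstarRel (s l : ℕ) (a b : ℕ) : Prop :=
  (b = a + 1 ∧ a + 1 < s) ∨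
  (a = 0 ∧ b = s - 1) ∨
  (1 ≤ l ∧ a = 0 ∧ b = s) ∨
  (b = a + 1 ∧ s ≤ a ∧ a + 1 < s + l) ∨
  (a = (if l = 0 then 0 else s + l - 1) ∧ s + l ≤ b)

/-- The graph `C*_{s,l}` of order `n`: a cycle `C_s` with a path of length `l`
attached, and `n - s - l` pendant edges attached at the far end of the path. -/
def Cstar (n s l : ℕ) : SimpleGraph (Fin n) :=
  SimpleGraph.fromRel (fun i j => cstarRel s l i.val j.val)

/-- The signless Laplacian matrix `Q(G) = D(G) + A(G)` of a finite simple graph. -/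
noncomputable def signlessLaplacian {V : Type*} [Fintype V] (G : SimpleGraph V) :
    Matrix V V ℝ :=
  fun i j => (if i = j then (G.degree i : ℝ) else 0) + (if G.Adj i j then 1 else 0)

/-- The least eigenvalue of the signless Laplacian of `G`. -/
noncomputable def qmin {V : Type*} [Fintype V] (G : SimpleGraph V) : ℝ :=
  sInf {μ : ℝ | ∃ x : V → ℝ, x ≠ 0 ∧ (signlessLaplacian G).mulVec x = μ • x}

/-!
Let `x` be an eigenvector of `Q(G)` for `q_min(G)`. A dominating set of at most `γ` vertices lies in
a connected dominating set of at most `3γ - 2` vertices, and two more vertices capture an odd cycle,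
so `G` has a connected nonbipartite dominating core with exactly `N = 3γ` vertices. Some edge of an
odd cycle of the core joins two vertices at which `x` has the same sign, and the core stays
connected without it. Number the core by increasing `|x|` and transplant `|x|` to `C*_{3,N-3}`: the
triangle receives the smallest values, the vertex carrying the pendant edges the largest one of the
core, and a vertex outside the core keeps its excess over a neighbour in the core. Up to signs, the
quadratic form `∑ (xᵤ + xᵥ)²` on the path becomes a sum of squared increments; each step of the path
is crossed by another edge of the core and each pendant edge is paid for by an edge of `G` leaving
the core, so the transplanted vector has at most the quadratic form of `x` and at least its norm.
If equality holds, the transplanted vector is a least eigenvector of `C*_{3,N-3}`. Its eigenvalue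
equations, summed over upper sets of the path, show that it increases strictly away from the
triangle, and then no edge of `G` can differ from those of `C*_{3,N-3}`.
-/

open Finset Matrix

section LeastEigenvalue

variable {V W : Type*} [Fintype V] [Fintype W]

theorem exists_least_eigenvector [Nonempty V] {A : Matrix V V ℝ} (hA : A.IsHermitian) :
    ∃ m : ℝ, (A - m • 1).PosSemidef ∧ ∃ x : V → ℝ, x ≠ 0 ∧ A *ᵥ x = m • x := by
  obtain ⟨i, hi⟩ := Finite.exists_min hA.eigenvalues
  refine ⟨hA.eigenvalues i, ?_, hA.eigenvectorBasis i, ?_, hA.mulVec_eigenvectorBasis i⟩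
  · rw [posSemidef_iff_isHermitian_and_spectrum_nonneg]
    refine ⟨hA.sub (isHermitian_one.smul (.all _)), fun μ hμ => ?_⟩
    rw [← Algebra.algebraMap_eq_smul_one, ← spectrum.sub_singleton_eq,
      hA.spectrum_real_eq_range_eigenvalues] at hμ
    obtain ⟨_, ⟨j, rfl⟩, _, rfl, rfl⟩ := hμ
    exact sub_nonneg.2 (hi j)
  · intro h
    exact hA.eigenvectorBasis.orthonormal.ne_zero i (by ext v; exact congrFun h v)

theorem signlessLaplacian_isHermitian (G : SimpleGraph V) : (signlessLaplacian G).IsHermitian := by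
  ext i j
  by_cases h : i = j
  · simp [h]
  · simp [signlessLaplacian, G.adj_comm, h, Ne.symm h]

theorem posSemidef_sub_qmin_and_exists_eigenvector [Nonempty V] (G : SimpleGraph V) :
    (signlessLaplacian G - qmin G • 1).PosSemidef ∧
      ∃ x : V → ℝ, x ≠ 0 ∧ signlessLaplacian G *ᵥ x = qmin G • x := by
  obtain ⟨m, hpsd, hm⟩ := exists_least_eigenvector (signlessLaplacian_isHermitian G)
  have hleast : IsLeast {μ : ℝ | ∃ x : V → ℝ, x ≠ 0 ∧ signlessLaplacian G *ᵥ x = μ • x} m := by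
    refine ⟨hm, fun μ ⟨x, hx, hμ⟩ => ?_⟩
    have hnonneg := hpsd.dotProduct_mulVec_nonneg x
    rw [sub_mulVec, hμ, smul_mulVec, one_mulVec, ← sub_smul, dotProduct_smul, smul_eq_mul]
      at hnonneg
    have hpos : 0 < star x ⬝ᵥ x := dotProduct_star_self_pos_iff.2 hx
    exact sub_nonneg.1 (nonneg_of_mul_nonneg_left hnonneg hpos)
  have hq : qmin G = m := hleast.csInf_eq
  exact hq ▸ ⟨hpsd, hm⟩

theorem qmin_mul_dotProduct_self_le [Nonempty V] (G : SimpleGraph V) (x : V → ℝ) :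
    qmin G * (x ⬝ᵥ x) ≤ x ⬝ᵥ signlessLaplacian G *ᵥ x := by
  have h := (posSemidef_sub_qmin_and_exists_eigenvector G).1.dotProduct_mulVec_nonneg x
  rw [sub_mulVec, smul_mulVec, one_mulVec, dotProduct_sub, dotProduct_smul, star_trivial] at h
  exact sub_nonneg.1 h

theorem signlessLaplacian_mulVec_eq_of_eq [Nonempty V] {G : SimpleGraph V} {x : V → ℝ}
    (h : x ⬝ᵥ signlessLaplacian G *ᵥ x = qmin G * (x ⬝ᵥ x)) :
    signlessLaplacian G *ᵥ x = qmin G • x := by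
  have hzero := (posSemidef_sub_qmin_and_exists_eigenvector G).1.dotProduct_mulVec_zero_iff x
  simp only [sub_mulVec, smul_mulVec, one_mulVec, dotProduct_sub, dotProduct_smul, star_trivial,
    h, smul_eq_mul, sub_self, true_iff] at hzero
  exact sub_eq_zero.1 hzero

theorem qmin_congr {G : SimpleGraph V} {H : SimpleGraph W} (e : G ≃g H) : qmin G = qmin H := by
  have hsub : signlessLaplacian G = (signlessLaplacian H).submatrix e e := by
    ext i j
    simp [signlessLaplacian, e.map_adj_iff, e.degree_eq]
  unfold qmin
  congr 1
  ext μ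
  refine (e.toEquiv.arrowCongr (.refl ℝ)).exists_congr fun x => and_congr ?_ ?_
  · exact not_congr (e.symm.surjective.injective_comp_right.eq_iff (b := (0 : V → ℝ))).symm
  · rw [hsub, show (signlessLaplacian H).submatrix e e *ᵥ x = _ from
      submatrix_mulVec_equiv _ x e e.toEquiv]
    change _ ↔ signlessLaplacian H *ᵥ (x ∘ e.symm) = μ • (x ∘ e.symm)
    rw [← e.surjective.injective_comp_right.eq_iff]
    exact Eq.congr rfl (by ext; simp)

theorem signlessLaplacian_mulVec_apply (G : SimpleGraph V) (x : V → ℝ) (u : V) :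
    (signlessLaplacian G *ᵥ x) u = ∑ v, if G.Adj u v then x u + x v else 0 := by
  simp only [mulVec, dotProduct, signlessLaplacian, add_mul, sum_add_distrib, ite_mul, zero_mul,
    one_mul, sum_ite_eq, mem_univ, if_true, G.degree_eq_sum_if_adj, sum_mul]
  simp only [← sum_add_distrib, ite_add_ite, add_zero]

theorem dotProduct_signlessLaplacian_mulVec (G : SimpleGraph V) (y x : V → ℝ) :
    2 * (y ⬝ᵥ signlessLaplacian G *ᵥ x) =
      ∑ u, ∑ v, if G.Adj u v then (y u + y v) * (x u + x v) else 0 := by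
  have hform : y ⬝ᵥ signlessLaplacian G *ᵥ x =
      ∑ u, ∑ v, if G.Adj u v then y u * (x u + x v) else 0 := by
    simp only [dotProduct, signlessLaplacian_mulVec_apply, mul_sum, mul_ite, mul_zero]
  have hswap : ∑ u, ∑ v, (if G.Adj u v then y u * (x u + x v) else 0) =
      ∑ u, ∑ v, if G.Adj u v then y v * (x u + x v) else 0 := by
    rw [sum_comm]
    simp only [G.adj_comm, add_comm]
  rw [two_mul]
  nth_rw 2 [hform]
  rw [hswap, hform]
  simp only [← sum_add_distrib, ite_add_ite, add_zero, ← add_mul]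

end LeastEigenvalue

section LabelledEdges

variable {V W : Type*} [Fintype V] [Fintype W] {n : ℕ}

/-- The edges of `G` after its vertices are labelled `0, …, n - 1` by `ℓ`, each edge being recorded
as the pair of its labels in increasing order. -/
noncomputable def labelledEdges (G : SimpleGraph V) (ℓ : V ≃ Fin n) : Finset (ℕ × ℕ) :=
  ({p | G.Adj p.1 p.2 ∧ ℓ p.1 < ℓ p.2} : Finset (V × V)).image fun p => (↑(ℓ p.1), ↑(ℓ p.2))

theorem mem_labelledEdges {G : SimpleGraph V} {ℓ : V ≃ Fin n} {u v : V} :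
    ((ℓ u : ℕ), (ℓ v : ℕ)) ∈ labelledEdges G ℓ ↔ G.Adj u v ∧ ℓ u < ℓ v := by
  simp [labelledEdges, Fin.val_inj]

theorem lt_of_mem_labelledEdges {G : SimpleGraph V} {ℓ : V ≃ Fin n} {p : ℕ × ℕ}
    (hp : p ∈ labelledEdges G ℓ) : p.1 < p.2 ∧ p.2 < n := by
  obtain ⟨q, hq, rfl⟩ := mem_image.1 hp
  exact ⟨(mem_filter.1 hq).2.2, (ℓ q.2).2⟩

theorem adj_iff_mem_labelledEdges {G : SimpleGraph V} (ℓ : V ≃ Fin n) {u v : V} :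
    G.Adj u v ↔ ((ℓ u : ℕ), (ℓ v : ℕ)) ∈ labelledEdges G ℓ ∨
      ((ℓ v : ℕ), (ℓ u : ℕ)) ∈ labelledEdges G ℓ := by
  rw [mem_labelledEdges, mem_labelledEdges, G.adj_comm v, ← and_or_left, lt_or_lt_iff_ne, ne_eq,
    ℓ.injective.eq_iff, iff_self_and]
  exact fun h => h.ne

theorem nonempty_iso_of_labelledEdges_eq {G : SimpleGraph V} {H : SimpleGraph W}
    {ℓ : V ≃ Fin n} {ℓ' : W ≃ Fin n} (h : labelledEdges G ℓ = labelledEdges H ℓ') :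
    Nonempty (G ≃g H) :=
  ⟨ℓ.trans ℓ'.symm, by simp [adj_iff_mem_labelledEdges ℓ, adj_iff_mem_labelledEdges ℓ', h]⟩

theorem sum_labelledEdges (G : SimpleGraph V) (ℓ : V ≃ Fin n) (X Y : ℕ → ℝ) :
    (fun v => Y (ℓ v)) ⬝ᵥ signlessLaplacian G *ᵥ (fun v => X (ℓ v)) =
      ∑ p ∈ labelledEdges G ℓ, (Y p.1 + Y p.2) * (X p.1 + X p.2) := by
  set B : ℕ → ℕ → ℝ := fun i j => (Y i + Y j) * (X i + X j) with hB
  have hsum : ∑ p ∈ labelledEdges G ℓ, B p.1 p.2 =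
      ∑ u, ∑ v, if G.Adj u v ∧ ℓ u < ℓ v then B (ℓ u) (ℓ v) else 0 := by
    have hinj : Function.Injective fun p : V × V => ((ℓ p.1 : ℕ), (ℓ p.2 : ℕ)) :=
      (Fin.val_injective.comp ℓ.injective).prodMap (Fin.val_injective.comp ℓ.injective)
    rw [labelledEdges, sum_image hinj.injOn, sum_filter, Fintype.sum_prod_type]
  have hswap : ∑ u, ∑ v, (if G.Adj u v ∧ ℓ u < ℓ v then B (ℓ u) (ℓ v) else 0) =
      ∑ u, ∑ v, if G.Adj u v ∧ ℓ v < ℓ u then B (ℓ u) (ℓ v) else 0 := by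
    rw [sum_comm]
    simp only [G.adj_comm, hB, add_comm]
  refine mul_left_cancel₀ two_ne_zero ((dotProduct_signlessLaplacian_mulVec G _ _).trans ?_)
  rw [two_mul, hsum]
  nth_rw 2 [hswap]
  simp only [← sum_add_distrib]
  refine sum_congr rfl fun u _ => sum_congr rfl fun v _ => ?_
  rcases lt_trichotomy (ℓ u) (ℓ v) with h | h | h
  · simp [h, h.not_gt, hB]
  · simp [ℓ.injective h]
  · simp [h, h.not_gt, hB]

theorem dotProduct_comp_equiv (ℓ : V ≃ Fin n) (X Y : ℕ → ℝ) :
    (fun v => Y (ℓ v)) ⬝ᵥ (fun v => X (ℓ v)) = ∑ k ∈ range n, Y k * X k := by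
  rw [← Fin.sum_univ_eq_sum_range (fun k => Y k * X k), ← ℓ.sum_comp (fun k => Y k * X k)]
  rfl

end LabelledEdges

section Comet

variable {n N : ℕ}

/-- The extremal graph `Cstar n 3 (N - 3)` is relabelled so that its core is a triangle `0, 1, 2`
continued by the path `2, 3, …, N - 1`. Deleting the edge `01` leaves a tree on the core rooted at
`N - 1`; this is the parent of `k` in that tree. -/
def cometSucc (k : ℕ) : ℕ := max 2 (k + 1)

theorem two_le_cometSucc (k : ℕ) : 2 ≤ cometSucc k := le_max_left _ _

theorem lt_cometSucc (k : ℕ) : k < cometSucc k := k.lt_succ_self.trans_le (le_max_right _ _)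

/-- The edges `k — cometSucc k` of the core of the relabelled extremal graph, without the edge
`01`. -/
def cometTree (N : ℕ) : Finset (ℕ × ℕ) := (range (N - 1)).image fun k => (k, cometSucc k)

/-- The pendant edges of the relabelled extremal graph, attached to the last core vertex. -/
def cometPendants (n N : ℕ) : Finset (ℕ × ℕ) := (Ico N n).image fun j => (N - 1, j)

/-- The edges of the extremal graph `Cstar n 3 (N - 3)`, relabelled as in `cometSucc`. -/
def cometEdges (n N : ℕ) : Finset (ℕ × ℕ) :=
  insert (0, 1) (cometTree N) ∪ cometPendants n N

theorem mem_cometEdges {p : ℕ × ℕ} :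
    p ∈ cometEdges n N ↔ (p.1 = 0 ∧ p.2 = 1 ∨ p.1 < N - 1 ∧ p.2 = cometSucc p.1) ∨
      p.1 = N - 1 ∧ N ≤ p.2 ∧ p.2 < n := by
  rcases p with ⟨i, j⟩
  simp only [cometEdges, cometTree, cometPendants, mem_union, mem_insert, mem_image, mem_range,
    mem_Ico, Prod.mk.injEq]
  grind

theorem cstarRel_swap_iff (hN : 3 ≤ N) {i j : ℕ} (hij : i < j) (hj : j < n) :
    (cstarRel 3 (N - 3) (Equiv.swap 0 2 i) (Equiv.swap 0 2 j) ∨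
      cstarRel 3 (N - 3) (Equiv.swap 0 2 j) (Equiv.swap 0 2 i)) ↔ (i, j) ∈ cometEdges n N := by
  obtain ⟨M, rfl⟩ := Nat.exists_eq_add_of_le' hN
  have hone : Equiv.swap 0 2 1 = 1 := rfl
  have hfix {k : ℕ} (hk : 3 ≤ k) : Equiv.swap 0 2 k = k :=
    Equiv.swap_apply_of_ne_of_ne (by omega) (by omega)
  simp only [mem_cometEdges, cstarRel, cometSucc, Nat.add_sub_cancel]
  obtain rfl | rfl | rfl | hi : i = 0 ∨ i = 1 ∨ i = 2 ∨ 3 ≤ i := by omega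
  · obtain rfl | rfl | hj : j = 1 ∨ j = 2 ∨ 3 ≤ j := by omega
    · simp [hone]
    · simp
    · rw [hfix hj, Equiv.swap_apply_left]
      grind
  · obtain rfl | hj : j = 2 ∨ 3 ≤ j := by omega
    · simp [hone]
    · rw [hfix hj, hone]
      grind
  · rw [hfix hij, Equiv.swap_apply_right]
    grind
  · rw [hfix hi, hfix (by omega)]
    grind

theorem labelledEdges_Cstar (hN : 3 ≤ N) (hn : N ≤ n) :
    labelledEdges (Cstar n 3 (N - 3)) (Equiv.swap ⟨0, by omega⟩ ⟨2, by omega⟩) =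
      cometEdges n N := by
  set σ : Fin n ≃ Fin n := Equiv.swap ⟨0, by omega⟩ ⟨2, by omega⟩ with hσ
  have hval (k : Fin n) : (k : ℕ) = Equiv.swap 0 2 (σ k : ℕ) := by
    simp only [hσ, Equiv.swap_apply_def, Fin.ext_iff]
    grind
  ext ⟨i, j⟩
  by_cases hij : i < j ∧ j < n
  · obtain ⟨a, ha⟩ : ∃ a, σ a = ⟨i, by omega⟩ := σ.surjective _
    obtain ⟨b, hb⟩ : ∃ b, σ b = ⟨j, by omega⟩ := σ.surjective _
    have hab : a ≠ b := by
      rintro rfl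
      exact hij.1.ne (Fin.ext_iff.1 (ha.symm.trans hb))
    have hmem := mem_labelledEdges (G := Cstar n 3 (N - 3)) (ℓ := σ) (u := a) (v := b)
    rw [ha, hb] at hmem
    rw [hmem, ← cstarRel_swap_iff hN hij.1 hij.2, Cstar, SimpleGraph.fromRel_adj, hval a, hval b,
      ha, hb]
    simp [hab, hij]
  · refine iff_of_false (fun h => hij (lt_of_mem_labelledEdges h)) fun h => hij ?_
    rw [mem_cometEdges] at h
    simp only [cometSucc] at h
    omega

theorem sum_cometEdges (hN : 2 ≤ N) (F : ℕ × ℕ → ℝ) :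
    ∑ p ∈ cometEdges n N, F p = F (0, 1) + ∑ k ∈ range (N - 1), F (k, cometSucc k) +
      ∑ j ∈ Ico N n, F (N - 1, j) := by
  have hroot : (0, 1) ∉ cometTree N := by simp [cometTree, cometSucc]
  have hdisj : Disjoint (insert (0, 1) (cometTree N)) (cometPendants n N) := by
    rw [disjoint_left]
    rintro ⟨i, j⟩
    simp only [cometTree, cometPendants, mem_insert, mem_image, mem_range, Prod.mk.injEq,
      not_exists]
    omega
  rw [cometEdges, sum_union hdisj, sum_insert hroot, cometTree, cometPendants,
    sum_image (by simp), sum_image (by simp)]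

/-- The bilinear form of the signless Laplacian of the relabelled extremal graph, in the coordinates
obtained by flipping signs so that the tree edges and the pendant edges contribute differences. -/
def cometBilin (n N : ℕ) (g f : ℕ → ℝ) : ℝ :=
  (g 0 + g 1) * (f 0 + f 1) +
    ∑ k ∈ range (N - 1), (g (cometSucc k) - g k) * (f (cometSucc k) - f k) +
    ∑ j ∈ Ico N n, (g j - g (N - 1)) * (f j - f (N - 1))

theorem exists_comet_signing (hN : 2 ≤ N) :
    ∃ s : ℕ → ℝ, (∀ k, s k * s k = 1) ∧ s 1 = s 0 ∧ (∀ k < N - 1, s (cometSucc k) = -s k) ∧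
      ∀ j ≥ N, s j = -s (N - 1) := by
  refine ⟨fun k => (-1) ^ min N (max 1 k), fun k => ?_, rfl, fun k hk => ?_, fun j hj => ?_⟩
  · exact pow_mul_pow_eq_one _ (by norm_num)
  · have : min N (max 1 (cometSucc k)) = min N (max 1 k) + 1 := by unfold cometSucc; omega
    simp only [this, pow_succ, mul_neg_one]
  · have : min N (max 1 j) = min N (max 1 (N - 1)) + 1 := by omega
    simp only [this, pow_succ, mul_neg_one]

theorem exists_comet_coordinates (hN : 3 ≤ N) (hn : N ≤ n) :
    ∃ T : (ℕ → ℝ) → Fin n → ℝ, Function.Surjective T ∧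
      (∀ g f, T g ⬝ᵥ signlessLaplacian (Cstar n 3 (N - 3)) *ᵥ T f = cometBilin n N g f) ∧
      ∀ g f, T g ⬝ᵥ T f = ∑ k ∈ range n, g k * f k := by
  obtain ⟨s, hs, hroot, htree, hpend⟩ := exists_comet_signing (N := N) (by omega)
  have hcancel (k : ℕ) (a b : ℝ) : s k * a * (s k * b) = a * b := by
    rw [mul_mul_mul_comm, hs, one_mul]
  set ℓ : Fin n ≃ Fin n := Equiv.swap ⟨0, by omega⟩ ⟨2, by omega⟩ with hℓ
  refine ⟨fun f v => s (ℓ v) * f (ℓ v), fun x => ?_, fun g f => ?_, fun g f => ?_⟩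
  · refine ⟨fun k => if h : k < n then s k * x (ℓ.symm ⟨k, h⟩) else 0, ?_⟩
    ext v
    simp [← mul_assoc, hs]
  · rw [sum_labelledEdges _ ℓ (fun k => s k * f k) (fun k => s k * g k), hℓ,
      labelledEdges_Cstar hN hn, sum_cometEdges (by omega), cometBilin]
    simp only [hroot, ← mul_add, hcancel]
    refine congr_arg₂ (· + ·) (congr_arg _ (sum_congr rfl fun k hk => ?_))
      (sum_congr rfl fun j hj => ?_)
    · rw [htree k (mem_range.1 hk)]
      linear_combination (g (cometSucc k) - g k) * (f (cometSucc k) - f k) * hs k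
    · rw [hpend j (mem_Ico.1 hj).1]
      linear_combination (g j - g (N - 1)) * (f j - f (N - 1)) * hs (N - 1)
  · rw [dotProduct_comp_equiv ℓ (fun k => s k * f k) (fun k => s k * g k)]
    simp only [hcancel]

theorem qmin_Cstar_mul_le_cometBilin (hN : 3 ≤ N) (hn : N ≤ n) (f : ℕ → ℝ) :
    qmin (Cstar n 3 (N - 3)) * ∑ k ∈ range n, f k * f k ≤ cometBilin n N f f := by
  obtain ⟨T, -, hform, hdot⟩ := exists_comet_coordinates hN hn
  have : NeZero n := ⟨by omega⟩
  rw [← hform, ← hdot]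
  exact qmin_mul_dotProduct_self_le _ _

theorem cometBilin_eq_of_minimizer (hN : 3 ≤ N) (hn : N ≤ n) {f : ℕ → ℝ}
    (h : cometBilin n N f f = qmin (Cstar n 3 (N - 3)) * ∑ k ∈ range n, f k * f k) (g : ℕ → ℝ) :
    cometBilin n N g f = qmin (Cstar n 3 (N - 3)) * ∑ k ∈ range n, g k * f k := by
  obtain ⟨T, -, hform, hdot⟩ := exists_comet_coordinates hN hn
  have : NeZero n := ⟨by omega⟩
  rw [← hform, ← hdot] at h ⊢
  rw [signlessLaplacian_mulVec_eq_of_eq h, dotProduct_smul, smul_eq_mul]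

theorem eq_zero_of_cometBilin_self_nonpos {f : ℕ → ℝ} (hN : 3 ≤ N)
    (h : cometBilin n N f f ≤ 0) : ∀ k < n, f k = 0 := by
  have htree_nonneg (k : ℕ) (_ : k ∈ range (N - 1)) :
      0 ≤ (f (cometSucc k) - f k) * (f (cometSucc k) - f k) := mul_self_nonneg _
  have hpend_nonneg (j : ℕ) (_ : j ∈ Ico N n) :
      0 ≤ (f j - f (N - 1)) * (f j - f (N - 1)) := mul_self_nonneg _
  have hroot : 0 ≤ (f 0 + f 1) * (f 0 + f 1) := mul_self_nonneg _
  have hA := sum_nonneg htree_nonneg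
  have hB := sum_nonneg hpend_nonneg
  unfold cometBilin at h
  have htree (k : ℕ) (hk : k < N - 1) : f (cometSucc k) = f k :=
    sub_eq_zero.1 (mul_self_eq_zero.1
      ((sum_eq_zero_iff_of_nonneg htree_nonneg).1 (by linarith) k (mem_range.2 hk)))
  have hpend (j : ℕ) (hN : N ≤ j) (hj : j < n) : f j = f (N - 1) :=
    sub_eq_zero.1 (mul_self_eq_zero.1
      ((sum_eq_zero_iff_of_nonneg hpend_nonneg).1 (by linarith) j (mem_Ico.2 ⟨hN, hj⟩)))
  have h01 : f 0 + f 1 = 0 := mul_self_eq_zero.1 (by linarith)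
  have h0 : f 2 = f 0 := htree 0 (by omega)
  have h1 : f 2 = f 1 := htree 1 (by omega)
  have hpath (k : ℕ) (hk : 2 ≤ k) : k < N → f k = 0 := by
    induction k, hk using Nat.le_induction with
    | base => intro _; linarith
    | succ k hk ih =>
      intro hkN
      have hstep := htree k (by omega)
      rwa [cometSucc, max_eq_right (by omega), ih (by omega)] at hstep
  intro k hk
  obtain rfl | rfl | hk2 : k = 0 ∨ k = 1 ∨ 2 ≤ k := by omega
  · linarith
  · linarith
  · obtain hkN | hkN := lt_or_ge k N
    · exact hpath k hk2 hkN
    · rw [hpend k hkN hk, hpath (N - 1) (by omega) (by omega)]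

theorem qmin_Cstar_pos (hN : 3 ≤ N) (hn : N ≤ n) : 0 < qmin (Cstar n 3 (N - 3)) := by
  obtain ⟨T, hT, hform, hdot⟩ := exists_comet_coordinates hN hn
  have : NeZero n := ⟨by omega⟩
  obtain ⟨-, x, hx, hQx⟩ := posSemidef_sub_qmin_and_exists_eigenvector (Cstar n 3 (N - 3))
  obtain ⟨f, rfl⟩ := hT x
  by_contra! hq
  refine hx (dotProduct_self_eq_zero.1 ?_)
  have hf : cometBilin n N f f ≤ 0 := by
    rw [← hform, hQx, dotProduct_smul, smul_eq_mul]
    exact mul_nonpos_of_nonpos_of_nonneg hq (dotProduct_self_star_nonneg (T f))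
  rw [hdot]
  refine sum_eq_zero fun k hk => ?_
  rw [eq_zero_of_cometBilin_self_nonpos hN hf k (mem_range.1 hk), zero_mul]

theorem cometBilin_upperSet {m : ℕ} (hm : 3 ≤ m) (hmN : m < N) (f : ℕ → ℝ) :
    cometBilin n N (fun k => if m ≤ k then 1 else 0) f = f m - f (m - 1) := by
  have hpend : ∀ j ∈ Ico N n, ((if m ≤ j then (1 : ℝ) else 0) - if m ≤ N - 1 then 1 else 0) *
      (f j - f (N - 1)) = 0 := by
    intro j hj
    rw [mem_Ico] at hj
    rw [if_pos (by omega), if_pos (by omega), sub_self, zero_mul]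
  have htree : ∀ k ∈ range (N - 1), k ≠ m - 1 →
      ((if m ≤ cometSucc k then (1 : ℝ) else 0) - if m ≤ k then 1 else 0) *
        (f (cometSucc k) - f k) = 0 := by
    intro k _ hk
    have : m ≤ cometSucc k ↔ m ≤ k := by unfold cometSucc; omega
    simp only [this, sub_self, zero_mul]
  have hsucc : cometSucc (m - 1) = m := by unfold cometSucc; omega
  rw [cometBilin, sum_eq_zero hpend, sum_eq_single_of_mem (m - 1) (by simp; omega) htree, hsucc]
  simp [show ¬m ≤ 0 by omega, show ¬m ≤ 1 by omega, show ¬m ≤ m - 1 by omega]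

theorem cometBilin_upperSet_two (hN : 3 ≤ N) (f : ℕ → ℝ) :
    cometBilin n N (fun k => if 2 ≤ k then 1 else 0) f = (f 2 - f 0) + (f 2 - f 1) := by
  obtain ⟨M, rfl⟩ := Nat.exists_eq_add_of_le' hN
  have hpend : ∀ j ∈ Ico (M + 3) n, ((if 2 ≤ j then (1 : ℝ) else 0) -
      if 2 ≤ M + 3 - 1 then 1 else 0) * (f j - f (M + 3 - 1)) = 0 := by
    intro j hj
    rw [mem_Ico] at hj
    rw [if_pos (by omega), if_pos (by omega), sub_self, zero_mul]
  rw [cometBilin, sum_eq_zero hpend, show M + 3 - 1 = M + 1 + 1 by omega, sum_range_succ',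
    sum_range_succ']
  simp [cometSucc]
  ring

theorem cometBilin_single_of_le_one {i : ℕ} (hi : i ≤ 1) (hN : 3 ≤ N) (f : ℕ → ℝ) :
    cometBilin n N (Pi.single i 1) f = (f 0 + f 1) - (f 2 - f i) := by
  have hzero {k : ℕ} (hk : 2 ≤ k) : Pi.single (M := fun _ => ℝ) i 1 k = 0 :=
    Pi.single_eq_of_ne (by omega) _
  have hroot : Pi.single (M := fun _ => ℝ) i 1 0 + Pi.single (M := fun _ => ℝ) i 1 1 = 1 := by
    obtain rfl | rfl : i = 0 ∨ i = 1 := by omega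
    all_goals simp
  have hpend : ∀ j ∈ Ico N n, (Pi.single (M := fun _ => ℝ) i 1 j -
      Pi.single (M := fun _ => ℝ) i 1 (N - 1)) * (f j - f (N - 1)) = 0 := by
    intro j hj
    rw [mem_Ico] at hj
    rw [hzero (by omega), hzero (by omega), sub_self, zero_mul]
  rw [cometBilin, hroot, sum_eq_zero hpend, sum_eq_single_of_mem i (by simp; omega)]
  · rw [hzero (two_le_cometSucc _), show cometSucc i = 2 by unfold cometSucc; omega,
      Pi.single_eq_same]
    ring
  · intro k _ hk
    rw [hzero (two_le_cometSucc _), Pi.single_eq_of_ne hk, sub_self, zero_mul]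

theorem cometBilin_single_pendant {j : ℕ} (hN : 3 ≤ N) (hj : N ≤ j) (hjn : j < n) (f : ℕ → ℝ) :
    cometBilin n N (Pi.single j 1) f = f j - f (N - 1) := by
  have hzero {k : ℕ} (hk : k < N) : Pi.single (M := fun _ => ℝ) j 1 k = 0 :=
    Pi.single_eq_of_ne (by omega) _
  have htree : ∀ k ∈ range (N - 1), (Pi.single (M := fun _ => ℝ) j 1 (cometSucc k) -
      Pi.single (M := fun _ => ℝ) j 1 k) * (f (cometSucc k) - f k) = 0 := by
    intro k hk
    rw [mem_range] at hk
    rw [hzero (by unfold cometSucc; omega), hzero (by omega), sub_self, zero_mul]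
  rw [cometBilin, sum_eq_zero htree, sum_eq_single_of_mem j (mem_Ico.2 ⟨hj, hjn⟩)]
  · simp [hzero (show 0 < N by omega), hzero (show 1 < N by omega), hzero (show N - 1 < N by omega)]
  · intro k _ hk
    simp [hk, hzero (show N - 1 < N by omega)]

section Eigenvector

variable {μ : ℝ} {f : ℕ → ℝ}

theorem sum_upperSet_mul (m : ℕ) (f : ℕ → ℝ) :
    ∑ k ∈ range n, (if m ≤ k then 1 else 0) * f k = ∑ k ∈ Ico m n, f k := by
  simp only [ite_mul, one_mul, zero_mul, ← sum_filter]
  exact sum_congr (by ext; simp [and_comm]) fun _ _ => rfl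

theorem comet_eigenvector_sub_pred (heig : ∀ g, cometBilin n N g f = μ * ∑ k ∈ range n, g k * f k)
    {m : ℕ} (hm : 3 ≤ m) (hmN : m < N) : f m - f (m - 1) = μ * ∑ k ∈ Ico m n, f k := by
  rw [← cometBilin_upperSet hm hmN, heig, sum_upperSet_mul]

theorem comet_eigenvector_sub_hub (hN : 3 ≤ N)
    (heig : ∀ g, cometBilin n N g f = μ * ∑ k ∈ range n, g k * f k)
    {j : ℕ} (hj : N ≤ j) (hjn : j < n) : f j - f (N - 1) = μ * f j := by
  rw [← cometBilin_single_pendant hN hj hjn, heig,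
    sum_eq_single_of_mem j (mem_range.2 hjn) fun k _ hk => by simp [hk], Pi.single_eq_same, one_mul]

theorem comet_eigenvector_triangle (hN : 3 ≤ N)
    (heig : ∀ g, cometBilin n N g f = μ * ∑ k ∈ range n, g k * f k)
    {i : ℕ} (hi : i ≤ 1) (hin : i < n) : (f 0 + f 1) - (f 2 - f i) = μ * f i := by
  rw [← cometBilin_single_of_le_one hi hN, heig,
    sum_eq_single_of_mem i (mem_range.2 hin) fun k _ hk => by simp [hk], Pi.single_eq_same, one_mul]

theorem comet_eigenvector_two_pos (hN : 3 ≤ N) (hn : 3 ≤ n) (hμ : 0 < μ)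
    (heig : ∀ g, cometBilin n N g f = μ * ∑ k ∈ range n, g k * f k)
    (hnonneg : ∀ k < n, 0 ≤ f k) (hne : ∃ k < n, f k ≠ 0) : 0 < f 2 := by
  have hterm : ∀ k ∈ Ico 2 n, 0 ≤ f k := fun k hk => hnonneg k (mem_Ico.1 hk).2
  have hsum := heig fun k => if 2 ≤ k then 1 else 0
  rw [cometBilin_upperSet_two hN, sum_upperSet_mul] at hsum
  have h0 := hnonneg 0 (by omega)
  have h1 := hnonneg 1 (by omega)
  refine (hnonneg 2 (by omega)).lt_of_ne' fun h2 => ?_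
  have htail := mul_nonneg hμ.le (sum_nonneg hterm)
  have hzero := (sum_eq_zero_iff_of_nonneg hterm).1
    ((mul_eq_zero.1 (by linarith)).resolve_left hμ.ne')
  obtain ⟨k, hk, hfk⟩ := hne
  obtain rfl | rfl | hk2 : k = 0 ∨ k = 1 ∨ 2 ≤ k := by omega
  · exact hfk (by linarith)
  · exact hfk (by linarith)
  · exact hfk (hzero k (mem_Ico.2 ⟨hk2, hk⟩))

theorem comet_eigenvector_pos (hN : 3 ≤ N) (hn : N ≤ n) (hμ : 0 < μ)
    (heig : ∀ g, cometBilin n N g f = μ * ∑ k ∈ range n, g k * f k)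
    (hnonneg : ∀ k < n, 0 ≤ f k) (hne : ∃ k < n, f k ≠ 0) {k : ℕ} (hk : 2 ≤ k) (hkn : k < n) :
    0 < f k := by
  have htwo := comet_eigenvector_two_pos hN (hN.trans hn) hμ heig hnonneg hne
  have hpath (k : ℕ) (hk : 2 ≤ k) : k < N → 0 < f k := by
    induction k, hk using Nat.le_induction with
    | base => exact fun _ => htwo
    | succ k hk ih =>
      intro hkN
      have hstep := comet_eigenvector_sub_pred heig (m := k + 1) (by omega) hkN
      have htail : 0 ≤ μ * ∑ k ∈ Ico (k + 1) n, f k :=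
        mul_nonneg hμ.le (sum_nonneg fun k hk => hnonneg k (mem_Ico.1 hk).2)
      rw [Nat.add_sub_cancel] at hstep
      linarith [ih (by omega)]
  obtain hkN | hkN := lt_or_ge k N
  · exact hpath k hk hkN
  · have hstep := comet_eigenvector_sub_hub hN heig hkN hkn
    have := mul_nonneg hμ.le (hnonneg k hkn)
    linarith [hpath (N - 1) (by omega) (by omega)]

theorem comet_eigenvalue_lt_one (hN : 3 ≤ N) (hn : N ≤ n) (hn4 : 4 ≤ n)
    (heig : ∀ g, cometBilin n N g f = μ * ∑ k ∈ range n, g k * f k)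
    (hpos : ∀ k, 2 ≤ k → k < n → 0 < f k) : μ < 1 := by
  have hlast := hpos (n - 1) (by omega) (by omega)
  obtain ⟨i, hi, hin, hstep⟩ :
      ∃ i, 2 ≤ i ∧ i < n ∧ f (n - 1) - f i = μ * f (n - 1) := by
    obtain rfl | hNn := hn.eq_or_lt
    · refine ⟨N - 1 - 1, by omega, by omega, ?_⟩
      have hIco : Ico (N - 1) N = {N - 1} := by ext; simp; omega
      rw [comet_eigenvector_sub_pred heig (by omega) (by omega), hIco, sum_singleton]
    · exact ⟨N - 1, by omega, by omega, comet_eigenvector_sub_hub hN heig (by omega) (by omega)⟩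
  refine lt_of_mul_lt_mul_right ?_ hlast.le
  linarith [hpos i hi hin]

/-- The values increase strictly from the triangle edge `01` towards the pendant vertices. -/
structure IsCometIncreasing (n N : ℕ) (f : ℕ → ℝ) : Prop where
  pos : 0 < f 0
  lt_succ : ∀ k < N - 1, f k < f (cometSucc k)
  hub_lt : ∀ j, N ≤ j → j < n → f (N - 1) < f j

theorem isCometIncreasing_of_eigenvector (hN : 3 ≤ N) (hn : N ≤ n) (hn4 : 4 ≤ n) (hμ : 0 < μ)
    (heig : ∀ g, cometBilin n N g f = μ * ∑ k ∈ range n, g k * f k)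
    (hnonneg : ∀ k < n, 0 ≤ f k) (hne : ∃ k < n, f k ≠ 0) : IsCometIncreasing n N f := by
  have hpos (k : ℕ) (hk : 2 ≤ k) (hkn : k < n) : 0 < f k :=
    comet_eigenvector_pos hN hn hμ heig hnonneg hne hk hkn
  have hμ1 := comet_eigenvalue_lt_one hN hn hn4 heig hpos
  have hzero := comet_eigenvector_triangle hN heig (Nat.zero_le 1) (by omega)
  have hone := comet_eigenvector_triangle hN heig le_rfl (by omega)
  have h2 := hpos 2 le_rfl (by omega)
  have heq : f 0 = f 1 := by
    have : (1 - μ) * (f 0 - f 1) = 0 := by linear_combination hzero - hone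
    exact sub_eq_zero.1 ((mul_eq_zero.1 this).resolve_left (sub_pos.2 hμ1).ne')
  have hscale : (3 - μ) * f 0 = f 2 := by linear_combination hzero + heq
  have h0 : 0 < f 0 := pos_of_mul_pos_right (hscale ▸ h2) (by linarith)
  have h02 : f 0 < f 2 := by nlinarith
  refine ⟨h0, fun k hk => ?_, fun j hj hjn => ?_⟩
  · obtain rfl | rfl | hk2 : k = 0 ∨ k = 1 ∨ 2 ≤ k := by omega
    · exact h02
    · exact heq ▸ h02
    · have htail : 0 < μ * ∑ k ∈ Ico (k + 1) n, f k :=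
        mul_pos hμ (sum_pos (fun k hk => hpos k (by linarith [mem_Ico.1 hk]) (mem_Ico.1 hk).2)
          (nonempty_Ico.2 (by omega)))
      have hstep := comet_eigenvector_sub_pred heig (m := k + 1) (by omega) (by omega)
      rw [Nat.add_sub_cancel] at hstep
      rw [cometSucc, max_eq_right (by omega)]
      linarith
  · linarith [comet_eigenvector_sub_hub hN heig hj hjn, mul_pos hμ (hpos j (by omega) hjn)]

end Eigenvector

theorem sum_le_sum_sum_of_cover {ι κ : Type*} {I : Finset ι} {R : Finset κ} {S : κ → Finset ι}
    {b : ι → ℝ} (hb : ∀ i, 0 ≤ b i) (hcover : ∀ i ∈ I, ∃ p ∈ R, i ∈ S p) :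
    ∑ i ∈ I, b i ≤ ∑ p ∈ R, ∑ i ∈ S p, b i := by
  have hterm (i : ι) (hi : i ∈ I) : b i ≤ ∑ p ∈ R, if i ∈ S p then b i else 0 := by
    obtain ⟨p, hp, hip⟩ := hcover i hi
    calc b i = if i ∈ S p then b i else 0 := (if_pos hip).symm
      _ ≤ _ := single_le_sum (f := fun p => if i ∈ S p then b i else 0)
        (fun p _ => by split_ifs <;> simp [hb]) hp
  calc ∑ i ∈ I, b i ≤ ∑ i ∈ I, ∑ p ∈ R, if i ∈ S p then b i else 0 := sum_le_sum hterm
    _ = ∑ p ∈ R, ∑ i ∈ I, if i ∈ S p then b i else 0 := sum_comm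
    _ ≤ ∑ p ∈ R, ∑ i ∈ S p, b i := sum_le_sum fun p _ => by
      rw [← sum_filter]
      exact sum_le_sum_of_subset_of_nonneg (fun i hi => (mem_filter.1 hi).2) fun i _ _ => hb i

/-- The edge set `R` on the vertices `0, …, N - 1` has an edge across every cut. -/
def CrossesEveryCut (N : ℕ) (R : Finset (ℕ × ℕ)) : Prop :=
  ∀ S : Set ℕ, (∃ i < N, i ∈ S) → (∃ i < N, i ∉ S) → ∃ p ∈ R, (p.1 ∈ S ↔ p.2 ∉ S)

theorem CrossesEveryCut.exists_mem_Ico {R : Finset (ℕ × ℕ)} (hcut : CrossesEveryCut N R)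
    (hlt : ∀ p ∈ R, p.1 < p.2) {k : ℕ} (hk : k < N - 1) : ∃ p ∈ R, k ∈ Ico p.1 p.2 := by
  obtain ⟨p, hp, hcross⟩ := hcut (Set.Iic k) ⟨0, by omega, by simp⟩ ⟨k + 1, by omega, by simp⟩
  have := hlt p hp
  simp only [Set.mem_Iic] at hcross
  exact ⟨p, hp, mem_Ico.2 (by omega)⟩

theorem cometSucc_le_of_lt {i j : ℕ} (hij : i < j) (hne : (i, j) ≠ (0, 1)) : cometSucc i ≤ j := by
  refine max_le ?_ hij
  by_contra! h
  exact hne (Prod.ext (by simp; omega) (by simp; omega))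

/-- The vertices other than `j` on the path from `i` to its ancestor `j` in `cometTree`. -/
def treePath (p : ℕ × ℕ) : Finset ℕ := insert p.1 (Ico (cometSucc p.1) p.2)

theorem CrossesEveryCut.exists_mem_treePath {R : Finset (ℕ × ℕ)} (hcut : CrossesEveryCut N R)
    (hlt : ∀ p ∈ R, p.1 < p.2) (hroot : (0, 1) ∉ R) {k : ℕ} (hk : k < N - 1) :
    ∃ p ∈ R, k ∈ treePath p := by
  by_cases hk2 : 2 ≤ k
  · obtain ⟨p, hp, hkp⟩ := hcut.exists_mem_Ico hlt hk
    rw [mem_Ico] at hkp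
    refine ⟨p, hp, ?_⟩
    simp only [treePath, cometSucc, mem_insert, mem_Ico]
    omega
  · obtain ⟨p, hp, hcross⟩ := hcut {k} ⟨k, by omega, rfl⟩ ⟨k + 1, by omega, by simp⟩
    have hne : ¬(p.1 = 0 ∧ p.2 = 1) := fun h => hroot (by rwa [← h.1, ← h.2])
    have := hlt p hp
    simp only [Set.mem_singleton_iff] at hcross
    exact ⟨p, hp, mem_insert.2 (.inl (by omega))⟩

/-- The amount by which the square of the increment of `a` across `p` exceeds the sum of the squares
of its first step along `treePath p` and of the remaining increment. -/
def treeSlack (a : ℕ → ℝ) (p : ℕ × ℕ) : ℝ :=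
  2 * (a (cometSucc p.1) - a p.1) * (a p.2 - a (cometSucc p.1))

section Charging

variable {a : ℕ → ℝ} (ha : MonotoneOn a (Set.Iio N))
include ha

theorem sum_sq_succ_sub_le {i j : ℕ} (hij : i ≤ j) (hj : j < N) :
    ∑ k ∈ Ico i j, (a (k + 1) - a k) ^ 2 ≤ (a j - a i) ^ 2 := by
  rw [← sum_Ico_sub a hij]
  refine sum_sq_le_sq_sum_of_nonneg fun k hk => sub_nonneg.2 (ha ?_ ?_ k.le_succ)
  all_goals simp only [mem_Ico] at hk; simp only [Set.mem_Iio]; omega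

theorem sum_sq_treePath_le {p : ℕ × ℕ} (hp : cometSucc p.1 ≤ p.2) (hpN : p.2 < N) :
    ∑ k ∈ treePath p, (a (cometSucc k) - a k) ^ 2 + treeSlack a p ≤ (a p.2 - a p.1) ^ 2 := by
  have hnotMem : p.1 ∉ Ico (cometSucc p.1) p.2 := by simp [cometSucc]
  have hpath : ∑ k ∈ Ico (cometSucc p.1) p.2, (a (cometSucc k) - a k) ^ 2 =
      ∑ k ∈ Ico (cometSucc p.1) p.2, (a (k + 1) - a k) ^ 2 := by
    refine sum_congr rfl fun k hk => ?_
    have := two_le_cometSucc p.1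
    rw [mem_Ico] at hk
    rw [cometSucc, max_eq_right (by omega)]
  rw [treePath, sum_insert hnotMem, hpath, treeSlack]
  linarith [sum_sq_succ_sub_le ha hp hpN]

theorem treeSlack_nonneg {p : ℕ × ℕ} (hp : cometSucc p.1 ≤ p.2) (hpN : p.2 < N) :
    0 ≤ treeSlack a p := by
  have hsucc := (lt_cometSucc p.1).le
  have hfirst : a p.1 ≤ a (cometSucc p.1) :=
    ha (Set.mem_Iio.2 (by omega)) (Set.mem_Iio.2 (by omega)) hsucc
  have hrest : a (cometSucc p.1) ≤ a p.2 := ha (Set.mem_Iio.2 (by omega)) (Set.mem_Iio.2 hpN) hp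
  exact mul_nonneg (mul_nonneg two_pos.le (sub_nonneg.2 hfirst)) (sub_nonneg.2 hrest)

theorem treeSlack_pos (hlt : ∀ k < N - 1, a k < a (cometSucc k)) {p : ℕ × ℕ}
    (hp : cometSucc p.1 < p.2) (hpN : p.2 < N) : 0 < treeSlack a p := by
  have htwo := two_le_cometSucc p.1
  have hsucc : cometSucc (cometSucc p.1) ≤ p.2 := cometSucc_le_of_lt hp (by simp; omega)
  have hpred := lt_cometSucc p.1
  have hrest : a (cometSucc p.1) < a p.2 :=
    (hlt _ (by omega)).trans_le (ha (Set.mem_Iio.2 (by omega)) (Set.mem_Iio.2 hpN) hsucc)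
  exact mul_pos (mul_pos two_pos (sub_pos.2 (hlt _ (by omega)))) (sub_pos.2 hrest)

variable {R : Finset (ℕ × ℕ)} (hcut : CrossesEveryCut N R) (hR : ∀ p ∈ R, p.1 < p.2 ∧ p.2 < N)
include hcut hR

theorem sum_sq_path_le_of_crossesEveryCut :
    ∑ k ∈ range (N - 1), (a (k + 1) - a k) ^ 2 ≤ ∑ p ∈ R, (a p.2 - a p.1) ^ 2 :=
  calc ∑ k ∈ range (N - 1), (a (k + 1) - a k) ^ 2
    _ ≤ ∑ p ∈ R, ∑ k ∈ Ico p.1 p.2, (a (k + 1) - a k) ^ 2 :=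
      sum_le_sum_sum_of_cover (fun _ => sq_nonneg _) fun _ hk =>
        hcut.exists_mem_Ico (fun p hp => (hR p hp).1) (mem_range.1 hk)
    _ ≤ ∑ p ∈ R, (a p.2 - a p.1) ^ 2 :=
      sum_le_sum fun p hp => sum_sq_succ_sub_le ha (hR p hp).1.le (hR p hp).2

theorem sum_sq_cometTree_le_of_crossesEveryCut (hroot : (0, 1) ∉ R) :
    ∑ k ∈ range (N - 1), (a (cometSucc k) - a k) ^ 2 +
        ∑ p ∈ R, treeSlack a p ≤ ∑ p ∈ R, (a p.2 - a p.1) ^ 2 := by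
  have hcover : ∑ k ∈ range (N - 1), (a (cometSucc k) - a k) ^ 2 ≤
      ∑ p ∈ R, ∑ k ∈ treePath p, (a (cometSucc k) - a k) ^ 2 :=
    sum_le_sum_sum_of_cover (fun _ => sq_nonneg _) fun _ hk =>
      hcut.exists_mem_treePath (fun p hp => (hR p hp).1) hroot (mem_range.1 hk)
  refine (add_le_add_left hcover _).trans ?_
  rw [← sum_add_distrib]
  exact sum_le_sum fun p hp => sum_sq_treePath_le ha
    (cometSucc_le_of_lt (hR p hp).1 fun h => hroot (h ▸ hp)) (hR p hp).2

end Charging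

theorem sq_abs_sub_abs_le (x y : ℝ) : (|y| - |x|) ^ 2 ≤ (x + y) ^ 2 := by
  rw [sq_le_sq, ← abs_neg x, add_comm, ← sub_neg_eq_add]
  exact abs_abs_sub_abs_le y (-x)

theorem add_sq_eq_of_mul_nonneg {x y : ℝ} (h : 0 ≤ x * y) : (x + y) ^ 2 = (|x| + |y|) ^ 2 := by
  have hmul : |x| * |y| = x * y := by rw [← abs_mul, abs_of_nonneg h]
  linear_combination -2 * hmul - sq_abs x - sq_abs y

section CoreEnergy

variable {X : ℕ → ℝ} (hX : MonotoneOn (fun k => |X k|) (Set.Iio N)) {E : Finset (ℕ × ℕ)}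
  (hE : ∀ p ∈ E, p.1 < p.2 ∧ p.2 < N) {e : ℕ × ℕ} (he : e ∈ E) (hsign : 0 ≤ X e.1 * X e.2)
  (hcut : CrossesEveryCut N (E.erase e))
include hX hE he hsign hcut

theorem coreEnergy_add_slack_le_of_root (hroot : e = (0, 1)) :
    (|X 0| + |X 1|) ^ 2 + ∑ k ∈ range (N - 1), (|X (cometSucc k)| - |X k|) ^ 2 +
        ∑ p ∈ E.erase e, treeSlack (fun k => |X k|) p ≤
      ∑ p ∈ E, (X p.1 + X p.2) ^ 2 := by
  have htree := sum_sq_cometTree_le_of_crossesEveryCut hX hcut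
    (fun p hp => hE p (mem_of_mem_erase hp)) (by simp [hroot])
  have habs : ∑ p ∈ E.erase e, (|X p.2| - |X p.1|) ^ 2 ≤ ∑ p ∈ E.erase e, (X p.1 + X p.2) ^ 2 :=
    sum_le_sum fun p _ => sq_abs_sub_abs_le _ _
  rw [← add_sum_erase _ _ he, add_sq_eq_of_mul_nonneg hsign]
  subst hroot
  linarith

-- Here the remaining edges are charged only to the path `0, 1, …, N - 1`, since `01` may be one of
-- them; the surplus of `e`, whose larger end is at least `2`, pays for replacing the step `01` of
-- the path by the step `02` of the tree.
theorem coreEnergy_add_slack_le_of_ne_root (hN : 3 ≤ N) (hroot : e ≠ (0, 1)) :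
    (|X 0| + |X 1|) ^ 2 + ∑ k ∈ range (N - 1), (|X (cometSucc k)| - |X k|) ^ 2 +
        4 * |X 0| * (|X 2| - |X 1|) ≤ ∑ p ∈ E, (X p.1 + X p.2) ^ 2 := by
  have hpath := sum_sq_path_le_of_crossesEveryCut hX hcut (fun p hp => hE p (mem_of_mem_erase hp))
  have habs : ∑ p ∈ E.erase e, (|X p.2| - |X p.1|) ^ 2 ≤ ∑ p ∈ E.erase e, (X p.1 + X p.2) ^ 2 :=
    sum_le_sum fun p _ => sq_abs_sub_abs_le _ _
  obtain ⟨hlt, heN⟩ := hE e he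
  have he2 : 2 ≤ e.2 := (two_le_cometSucc _).trans (cometSucc_le_of_lt hlt hroot)
  have hedge : (|X 0| + |X 2|) ^ 2 ≤ (|X e.1| + |X e.2|) ^ 2 := by
    gcongr ?_ ^ 2
    refine add_le_add ?_ ?_
    · exact hX (Set.mem_Iio.2 (by omega)) (Set.mem_Iio.2 (by omega)) (Nat.zero_le _)
    · exact hX (Set.mem_Iio.2 (by omega)) (Set.mem_Iio.2 heN) he2
  have hcompare : ∑ k ∈ range (N - 1), (|X (cometSucc k)| - |X k|) ^ 2 =
      ∑ k ∈ range (N - 1), (|X (k + 1)| - |X k|) ^ 2 + (|X 2| - |X 0|) ^ 2 -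
        (|X 1| - |X 0|) ^ 2 := by
    obtain ⟨M, hM⟩ : ∃ M, N - 1 = M + 1 := ⟨N - 2, by omega⟩
    rw [hM, sum_range_succ', sum_range_succ']
    have hlarge (k : ℕ) : cometSucc (k + 1) = k + 1 + 1 := max_eq_right (by omega)
    have hzero : cometSucc 0 = 2 := rfl
    simp only [hlarge, hzero, Nat.zero_add]
    ring
  rw [← add_sum_erase _ _ he, add_sq_eq_of_mul_nonneg hsign, hcompare]
  linarith

theorem coreEnergy_le (hN : 3 ≤ N) :
    (|X 0| + |X 1|) ^ 2 + ∑ k ∈ range (N - 1), (|X (cometSucc k)| - |X k|) ^ 2 ≤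
      ∑ p ∈ E, (X p.1 + X p.2) ^ 2 := by
  by_cases hroot : e = (0, 1)
  · refine le_trans (le_add_of_nonneg_right (sum_nonneg fun p hp => ?_))
      (coreEnergy_add_slack_le_of_root hX hE he hsign hcut hroot)
    obtain ⟨hlt, hpN⟩ := hE p (mem_of_mem_erase hp)
    exact treeSlack_nonneg hX (cometSucc_le_of_lt hlt (hroot ▸ ne_of_mem_erase hp)) hpN
  · refine le_trans (le_add_of_nonneg_right (mul_nonneg (by positivity) (sub_nonneg.2 ?_)))
      (coreEnergy_add_slack_le_of_ne_root hX hE he hsign hcut hN hroot)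
    exact hX (Set.mem_Iio.2 (by omega)) (Set.mem_Iio.2 (by omega)) one_le_two

theorem eq_insert_cometTree_of_coreEnergy_eq (hN : 3 ≤ N) (hpos : 0 < |X 0|)
    (hlt : ∀ k < N - 1, |X k| < |X (cometSucc k)|)
    (heq : ∑ p ∈ E, (X p.1 + X p.2) ^ 2 =
      (|X 0| + |X 1|) ^ 2 + ∑ k ∈ range (N - 1), (|X (cometSucc k)| - |X k|) ^ 2) :
    E = insert (0, 1) (cometTree N) := by
  have hroot : e = (0, 1) := by
    by_contra hroot
    have hslack := coreEnergy_add_slack_le_of_ne_root hX hE he hsign hcut hN hroot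
    have hgap : |X 1| < |X 2| := hlt 1 (by omega)
    linarith [mul_pos (mul_pos four_pos hpos) (sub_pos.2 hgap)]
  have hEe (p) (hp : p ∈ E.erase e) := hE p (mem_of_mem_erase hp)
  have hle (p) (hp : p ∈ E.erase e) : cometSucc p.1 ≤ p.2 :=
    cometSucc_le_of_lt (hEe p hp).1 (hroot ▸ ne_of_mem_erase hp)
  have hslack := coreEnergy_add_slack_le_of_root hX hE he hsign hcut hroot
  have hshort (p) (hp : p ∈ E.erase e) : p.2 = cometSucc p.1 := by
    refine (hle p hp).eq_or_lt.elim Eq.symm fun hlong => ?_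
    have := sum_pos' (fun q hq => treeSlack_nonneg hX (hle q hq) (hEe q hq).2)
      ⟨p, hp, treeSlack_pos hX hlt hlong (hEe p hp).2⟩
    linarith
  subst hroot
  rw [← insert_erase he]
  congr 1
  ext ⟨i, j⟩
  simp only [cometTree, mem_image, mem_range, Prod.mk.injEq]
  constructor
  · intro hij
    have hlt := lt_cometSucc i
    have hjN : j < N := (hEe (i, j) hij).2
    have hj : j = cometSucc i := hshort _ hij
    exact ⟨i, by omega, rfl, hj.symm⟩
  · rintro ⟨k, hk, rfl, rfl⟩
    obtain ⟨p, hp, hkp⟩ :=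
      hcut.exists_mem_treePath (fun p hp => (hEe p hp).1) (by simp) hk
    obtain rfl : k = p.1 := by simpa [treePath, hshort p hp] using hkp
    rwa [← hshort p hp]

end CoreEnergy

/-- Labels `0, …, n - 1` of the vertices of a graph with edge set `L`, the labels below `N` forming
a connected nonbipartite dominating core on which the vector `X` is sorted by absolute value: `e` is
an edge of the core that is not a bridge and joins values of the same sign, and every vertex `j`
outside the core has the core vertex `c j` as a neighbour. -/
structure IsCoreLabelling (n N : ℕ) (L : Finset (ℕ × ℕ)) (X : ℕ → ℝ) (c : ℕ → ℕ) (e : ℕ × ℕ) :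
    Prop where
  three_le : 3 ≤ N
  le_card : N ≤ n
  lt_of_mem : ∀ p ∈ L, p.1 < p.2 ∧ p.2 < n
  monotoneOn : MonotoneOn (fun k => |X k|) (Set.Iio N)
  edge_mem : e ∈ L.filter fun p => p.2 < N
  edge_sign : 0 ≤ X e.1 * X e.2
  crosses : CrossesEveryCut N ((L.filter fun p => p.2 < N).erase e)
  parent_lt : ∀ j, N ≤ j → j < n → c j < N
  parent_mem : ∀ j, N ≤ j → j < n → (c j, j) ∈ L

/-- The trial vector on the extremal graph obtained from `X`: a vertex outside the core keeps its
increment over its neighbour `c k`, cut off at zero, when it is moved to the last core vertex. -/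
noncomputable def transplant (N : ℕ) (c : ℕ → ℕ) (X : ℕ → ℝ) (k : ℕ) : ℝ :=
  if k < N then |X k| else |X (N - 1)| + max (|X k| - |X (c k)|) 0

theorem transplant_of_lt {c : ℕ → ℕ} {X : ℕ → ℝ} {k : ℕ} (hk : k < N) :
    transplant N c X k = |X k| := if_pos hk

theorem transplant_of_le {c : ℕ → ℕ} {X : ℕ → ℝ} {k : ℕ} (hk : N ≤ k) :
    transplant N c X k = |X (N - 1)| + max (|X k| - |X (c k)|) 0 := if_neg hk.not_gt

theorem max_sub_zero_sq_le (x y : ℝ) : max (|y| - |x|) 0 ^ 2 ≤ (x + y) ^ 2 := by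
  refine le_trans ?_ (sq_abs_sub_abs_le x y)
  rw [sq_le_sq, abs_of_nonneg (le_max_right _ _)]
  exact max_le (le_abs_self _) (abs_nonneg _)

namespace IsCoreLabelling

variable {L : Finset (ℕ × ℕ)} {X : ℕ → ℝ} {c : ℕ → ℕ} {e : ℕ × ℕ}
  (h : IsCoreLabelling n N L X c e)
include h

theorem abs_le_abs_hub {k : ℕ} (hk : k < N) : |X k| ≤ |X (N - 1)| :=
  h.monotoneOn (Set.mem_Iio.2 hk) (Set.mem_Iio.2 (by omega)) (by omega)

theorem abs_le_transplant {k : ℕ} (hk : k < n) : |X k| ≤ transplant N c X k := by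
  obtain hkN | hkN := lt_or_ge k N
  · exact (transplant_of_lt hkN).ge
  · rw [transplant_of_le hkN]
    linarith [le_max_left (|X k| - |X (c k)|) 0, h.abs_le_abs_hub (h.parent_lt k hkN hk)]

theorem cometBilin_transplant :
    cometBilin n N (transplant N c X) (transplant N c X) =
      (|X 0| + |X 1|) ^ 2 + ∑ k ∈ range (N - 1), (|X (cometSucc k)| - |X k|) ^ 2 +
        ∑ j ∈ Ico N n, max (|X j| - |X (c j)|) 0 ^ 2 := by
  have hN := h.three_le
  have htree : ∀ k ∈ range (N - 1), (transplant N c X (cometSucc k) - transplant N c X k) *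
      (transplant N c X (cometSucc k) - transplant N c X k) =
        (|X (cometSucc k)| - |X k|) ^ 2 := by
    intro k hk
    rw [mem_range] at hk
    rw [transplant_of_lt (k := cometSucc k) (by unfold cometSucc; omega),
      transplant_of_lt (k := k) (by omega), sq]
  have hpend : ∀ j ∈ Ico N n, (transplant N c X j - transplant N c X (N - 1)) *
      (transplant N c X j - transplant N c X (N - 1)) = max (|X j| - |X (c j)|) 0 ^ 2 := by
    intro j hj
    rw [transplant_of_le (mem_Ico.1 hj).1, transplant_of_lt (by omega)]
    ring
  rw [cometBilin, sum_congr rfl htree, sum_congr rfl hpend, transplant_of_lt (by omega),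
    transplant_of_lt (by omega), sq]

theorem sum_eq_core_add_pendants_add_extra (F : ℕ × ℕ → ℝ) :
    ∑ p ∈ L, F p = ∑ p ∈ L with p.2 < N, F p + ∑ j ∈ Ico N n, F (c j, j) +
      ∑ p ∈ L with N ≤ p.2 ∧ p.1 ≠ c p.2, F p := by
  have hpend : ({p ∈ L | N ≤ p.2 ∧ p.1 = c p.2} : Finset (ℕ × ℕ)) =
      (Ico N n).image fun j => (c j, j) := by
    ext ⟨i, j⟩
    simp only [mem_filter, mem_image, mem_Ico, Prod.mk.injEq]
    constructor
    · rintro ⟨hij, hj, rfl⟩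
      exact ⟨j, ⟨hj, (h.lt_of_mem _ hij).2⟩, rfl, rfl⟩
    · rintro ⟨j, ⟨hj, hjn⟩, rfl, rfl⟩
      exact ⟨h.parent_mem j hj hjn, hj, rfl⟩
  rw [← sum_filter_add_sum_filter_not L (fun p => p.2 < N),
    ← sum_filter_add_sum_filter_not (L.filter fun p => ¬p.2 < N) (fun p => p.1 = c p.2),
    filter_filter, filter_filter, ← add_assoc]
  simp only [not_lt, ← ne_eq, hpend]
  rw [sum_image fun i _ j _ hij => (Prod.mk.inj hij).2]

theorem sum_core_ge : (|X 0| + |X 1|) ^ 2 + ∑ k ∈ range (N - 1), (|X (cometSucc k)| - |X k|) ^ 2 ≤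
    ∑ p ∈ L with p.2 < N, (X p.1 + X p.2) ^ 2 :=
  coreEnergy_le h.monotoneOn
    (fun p hp => ⟨(h.lt_of_mem p (mem_filter.1 hp).1).1, (mem_filter.1 hp).2⟩)
    h.edge_mem h.edge_sign h.crosses h.three_le

theorem cometBilin_transplant_le :
    cometBilin n N (transplant N c X) (transplant N c X) ≤ ∑ p ∈ L, (X p.1 + X p.2) ^ 2 := by
  rw [h.cometBilin_transplant, h.sum_eq_core_add_pendants_add_extra]
  have hpend : ∑ j ∈ Ico N n, max (|X j| - |X (c j)|) 0 ^ 2 ≤ ∑ j ∈ Ico N n, (X (c j) + X j) ^ 2 :=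
    sum_le_sum fun j _ => max_sub_zero_sq_le (X (c j)) (X j)
  have hextra : 0 ≤ ∑ p ∈ L with N ≤ p.2 ∧ p.1 ≠ c p.2, (X p.1 + X p.2) ^ 2 :=
    sum_nonneg fun p _ => sq_nonneg _
  linarith [h.sum_core_ge]

theorem equality_cases_of_cometBilin_transplant_eq
    (heq : cometBilin n N (transplant N c X) (transplant N c X) = ∑ p ∈ L, (X p.1 + X p.2) ^ 2) :
    (∑ p ∈ L with p.2 < N, (X p.1 + X p.2) ^ 2 =
      (|X 0| + |X 1|) ^ 2 + ∑ k ∈ range (N - 1), (|X (cometSucc k)| - |X k|) ^ 2) ∧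
    (∀ j, N ≤ j → j < n → max (|X j| - |X (c j)|) 0 ^ 2 = (X (c j) + X j) ^ 2) ∧
    ∀ p ∈ L, N ≤ p.2 → p.1 ≠ c p.2 → X p.1 + X p.2 = 0 := by
  rw [h.cometBilin_transplant, h.sum_eq_core_add_pendants_add_extra] at heq
  have hpend_le : ∀ j ∈ Ico N n, max (|X j| - |X (c j)|) 0 ^ 2 ≤ (X (c j) + X j) ^ 2 :=
    fun j _ => max_sub_zero_sq_le (X (c j)) (X j)
  have hextra_nonneg : ∀ p ∈ L.filter fun p => N ≤ p.2 ∧ p.1 ≠ c p.2, 0 ≤ (X p.1 + X p.2) ^ 2 :=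
    fun p _ => sq_nonneg _
  have hcore := h.sum_core_ge
  have hpend := sum_le_sum hpend_le
  have hextra := sum_nonneg hextra_nonneg
  refine ⟨by linarith, fun j hN hj => ?_, fun p hp hN hc => ?_⟩
  · exact (sum_eq_sum_iff_of_le hpend_le).1 (by linarith) j (mem_Ico.2 ⟨hN, hj⟩)
  · exact pow_eq_zero_iff two_ne_zero |>.1
      ((sum_eq_zero_iff_of_nonneg hextra_nonneg).1 (by linarith) p (mem_filter.2 ⟨hp, hN, hc⟩))

theorem abs_zero_pos (hinc : IsCometIncreasing n N (transplant N c X)) : 0 < |X 0| := by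
  rw [← transplant_of_lt (N := N) (c := c) (by linarith [h.three_le])]
  exact hinc.pos

theorem abs_hub_lt (hX : ∀ j < n, transplant N c X j = |X j|)
    (hinc : IsCometIncreasing n N (transplant N c X)) {j : ℕ} (hN : N ≤ j) (hj : j < n) :
    |X (N - 1)| < |X j| := by
  have hle := h.le_card
  have h3 := h.three_le
  rw [← hX j hj, ← hX (N - 1) (by omega)]
  exact hinc.hub_lt j hN hj

theorem abs_lt_abs_cometSucc (hX : ∀ j < n, transplant N c X j = |X j|)
    (hinc : IsCometIncreasing n N (transplant N c X)) {k : ℕ} (hk : k < N - 1) :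
    |X k| < |X (cometSucc k)| := by
  have hle := h.le_card
  have h3 := h.three_le
  rw [← hX k (by omega), ← hX (cometSucc k) (by unfold cometSucc; omega)]
  exact hinc.lt_succ k hk

theorem parent_eq_hub (hX : ∀ j < n, transplant N c X j = |X j|)
    (hinc : IsCometIncreasing n N (transplant N c X)) {j : ℕ} (hN : N ≤ j) (hj : j < n) :
    c j = N - 1 := by
  have hcj := h.parent_lt j hN hj
  have hhub := h.abs_hub_lt hX hinc hN hj
  have htr := hX j hj
  rw [transplant_of_le hN] at htr
  have habs : |X (c j)| = |X (N - 1)| := by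
    obtain hmax | hmax := max_choice (|X j| - |X (c j)|) 0 <;> rw [hmax] at htr <;> linarith
  by_contra hne
  have hlt := h.abs_lt_abs_cometSucc hX hinc (k := c j) (by omega)
  have hle : |X (cometSucc (c j))| ≤ |X (N - 1)| :=
    h.abs_le_abs_hub (by have := h.three_le; unfold cometSucc; omega)
  linarith

theorem core_eq_insert_cometTree
    (heq : cometBilin n N (transplant N c X) (transplant N c X) = ∑ p ∈ L, (X p.1 + X p.2) ^ 2)
    (hX : ∀ j < n, transplant N c X j = |X j|)
    (hinc : IsCometIncreasing n N (transplant N c X)) :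
    (L.filter fun p => p.2 < N) = insert (0, 1) (cometTree N) :=
  eq_insert_cometTree_of_coreEnergy_eq h.monotoneOn
    (fun p hp => ⟨(h.lt_of_mem p (mem_filter.1 hp).1).1, (mem_filter.1 hp).2⟩)
    h.edge_mem h.edge_sign h.crosses h.three_le (h.abs_zero_pos hinc)
    (fun _ hk => h.abs_lt_abs_cometSucc hX hinc hk)
    (h.equality_cases_of_cometBilin_transplant_eq heq).1

theorem hub_mul_neg
    (heq : cometBilin n N (transplant N c X) (transplant N c X) = ∑ p ∈ L, (X p.1 + X p.2) ^ 2)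
    (hX : ∀ j < n, transplant N c X j = |X j|)
    (hinc : IsCometIncreasing n N (transplant N c X)) {j : ℕ} (hN : N ≤ j) (hj : j < n) :
    X (N - 1) * X j < 0 := by
  have hsq := (h.equality_cases_of_cometBilin_transplant_eq heq).2.1 j hN hj
  have hlt := h.abs_hub_lt hX hinc hN hj
  have hhub : 0 < |X (N - 1)| :=
    (h.abs_zero_pos hinc).trans_le (h.abs_le_abs_hub (by linarith [h.three_le]))
  have hprod : 0 < |X (N - 1)| * |X j| := mul_pos hhub (hhub.trans hlt)
  rw [h.parent_eq_hub hX hinc hN hj, max_eq_left (sub_nonneg.2 hlt.le)] at hsq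
  linarith [sq_abs (X j), sq_abs (X (N - 1)), sub_sq |X j| |X (N - 1)|, add_sq (X (N - 1)) (X j)]

theorem fst_eq_hub_of_mem
    (heq : cometBilin n N (transplant N c X) (transplant N c X) = ∑ p ∈ L, (X p.1 + X p.2) ^ 2)
    (hX : ∀ j < n, transplant N c X j = |X j|)
    (hinc : IsCometIncreasing n N (transplant N c X)) {p : ℕ × ℕ} (hp : p ∈ L) (hN : N ≤ p.2) :
    p.1 = N - 1 := by
  obtain ⟨hlt, hpn⟩ := h.lt_of_mem p hp
  have hhub := h.abs_hub_lt hX hinc hN hpn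
  have hneg := h.hub_mul_neg heq hX hinc hN hpn
  by_contra hne
  have hsum := (h.equality_cases_of_cometBilin_transplant_eq heq).2.2 p hp hN
    (by rwa [h.parent_eq_hub hX hinc hN hpn])
  obtain hi | hi := lt_or_ge p.1 N
  · have habs : |X p.1| = |X p.2| := by rw [eq_neg_of_add_eq_zero_left hsum, abs_neg]
    linarith [h.abs_le_abs_hub hi]
  · have hi_neg := h.hub_mul_neg heq hX hinc hi (hlt.trans hpn)
    rw [eq_neg_of_add_eq_zero_left hsum, mul_neg] at hi_neg
    linarith

theorem eq_cometEdges
    (heq : cometBilin n N (transplant N c X) (transplant N c X) = ∑ p ∈ L, (X p.1 + X p.2) ^ 2)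
    (hX : ∀ j < n, transplant N c X j = |X j|)
    (hinc : IsCometIncreasing n N (transplant N c X)) : L = cometEdges n N := by
  ext p
  rw [cometEdges, mem_union, ← h.core_eq_insert_cometTree heq hX hinc, mem_filter, cometPendants,
    mem_image]
  constructor
  · intro hp
    obtain hN | hN := lt_or_ge p.2 N
    · exact .inl ⟨hp, hN⟩
    · exact .inr ⟨p.2, mem_Ico.2 ⟨hN, (h.lt_of_mem p hp).2⟩,
        by rw [← h.fst_eq_hub_of_mem heq hX hinc hp hN]⟩
  · rintro (⟨hp, -⟩ | ⟨j, hj, rfl⟩)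
    · exact hp
    · obtain ⟨hN, hj⟩ := mem_Ico.1 hj
      simpa only [h.parent_eq_hub hX hinc hN hj] using h.parent_mem j hN hj

theorem sq_le_transplant_sq {k : ℕ} (hk : k < n) :
    X k * X k ≤ transplant N c X k * transplant N c X k := by
  rw [← abs_mul_abs_self (X k)]
  exact mul_self_le_mul_self (abs_nonneg _) (h.abs_le_transplant hk)

theorem sum_sq_le_sum_transplant :
    ∑ k ∈ range n, X k * X k ≤ ∑ k ∈ range n, transplant N c X k * transplant N c X k :=
  sum_le_sum fun _ hk => h.sq_le_transplant_sq (mem_range.1 hk)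

theorem transplant_eq_abs_of_sum_eq
    (hsum : ∑ k ∈ range n, X k * X k = ∑ k ∈ range n, transplant N c X k * transplant N c X k) :
    ∀ k < n, transplant N c X k = |X k| := by
  intro k hk
  have hsq := (sum_eq_sum_iff_of_le fun j hj => h.sq_le_transplant_sq (mem_range.1 hj)).1 hsum k
    (mem_range.2 hk)
  rw [← abs_mul_abs_self (X k)] at hsq
  exact ((mul_self_inj (abs_nonneg _) ((abs_nonneg _).trans (h.abs_le_transplant hk))).1 hsq).symm

theorem qmin_Cstar_le_and_eq_cometEdges (hn : 4 ≤ n) {q : ℝ}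
    (hq : ∑ p ∈ L, (X p.1 + X p.2) ^ 2 = q * ∑ k ∈ range n, X k * X k)
    (hne : ∃ k < n, X k ≠ 0) :
    qmin (Cstar n 3 (N - 3)) ≤ q ∧ (q = qmin (Cstar n 3 (N - 3)) → L = cometEdges n N) := by
  have hpos : 0 < qmin (Cstar n 3 (N - 3)) := qmin_Cstar_pos h.three_le h.le_card
  have hX_pos : 0 < ∑ k ∈ range n, X k * X k := by
    obtain ⟨k, hk, hXk⟩ := hne
    exact sum_pos' (fun k _ => mul_self_nonneg _) ⟨k, mem_range.2 hk, mul_self_pos.2 hXk⟩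
  have hnorm := mul_le_mul_of_nonneg_left h.sum_sq_le_sum_transplant hpos.le
  have hray := qmin_Cstar_mul_le_cometBilin h.three_le h.le_card (transplant N c X)
  have hform := h.cometBilin_transplant_le
  refine ⟨le_of_mul_le_mul_right (by linarith) hX_pos, fun hq_eq => ?_⟩
  rw [hq_eq] at hq
  have hX := h.transplant_eq_abs_of_sum_eq
    (mul_left_cancel₀ hpos.ne' (hnorm.antisymm (by linarith)))
  refine h.eq_cometEdges (by linarith) hX (isCometIncreasing_of_eigenvector h.three_le h.le_card hn
    hpos (cometBilin_eq_of_minimizer h.three_le h.le_card (by linarith)) (fun k hk => ?_) ?_)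
  · rw [hX k hk]
    exact abs_nonneg _
  · obtain ⟨k, hk, hXk⟩ := hne
    exact ⟨k, hk, by rwa [hX k hk, abs_ne_zero]⟩

end IsCoreLabelling

end Comet

section Core

open SimpleGraph

variable {V : Type*} {G : SimpleGraph V}

theorem exists_isCycle_odd_of_not_colorable_two (hG : G.Connected) (hnb : ¬G.Colorable 2) :
    ∃ (u : V) (w : G.Walk u u), w.IsCycle ∧ Odd w.length := by
  obtain ⟨T, hTG, hT⟩ := hG.exists_isTree_le
  obtain ⟨c⟩ := hT.colorable_two
  obtain ⟨u, v, huv, hc⟩ : ∃ u v, G.Adj u v ∧ c u = c v := by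
    by_contra! hproper
    exact hnb ⟨Coloring.mk c fun {u v} => hproper u v⟩
  obtain ⟨p, hp, -⟩ := hT.existsUnique_path v u
  refine ⟨u, (p.mapLe hTG).cons huv, ?_, ?_⟩
  · rw [Walk.cons_isCycle_iff]
    refine ⟨hp.mapLe hTG, fun hmem => ?_⟩
    rw [Walk.edges_mapLe_eq_edges] at hmem
    exact c.valid (p.adj_of_mem_edges hmem) hc
  · let c' : T.Coloring Bool := recolorOfEquiv T finTwoEquiv c
    have heven : Even p.length := (c'.even_length_iff_congr p).2 (by simp [c', hc])
    rw [Walk.length_cons, Walk.length_map]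
    exact heven.add_one

theorem exists_mem_edges_of_odd {u : V} (w : G.Walk u u) (hw : Odd w.length) (s : V → Bool) :
    ∃ a b, s(a, b) ∈ w.edges ∧ s a = s b := by
  by_contra! hs
  let H : SimpleGraph V := (⊤ : SimpleGraph Bool).comap s
  have hH : ∀ e ∈ w.edges, e ∈ H.edgeSet := by
    intro e he
    induction e with | _ a b => exact hs a b he
  have heven := (Coloring.even_length_iff_congr (Coloring.mk s id)
    (w.transfer H hH)).2 Iff.rfl
  rw [Walk.length_transfer] at heven
  exact Nat.not_even_iff_odd.2 hw heven

theorem exists_adj_eq_not_isBridge (hG : G.Connected) (hnb : ¬G.Colorable 2) (s : V → Bool) :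
    ∃ u v, G.Adj u v ∧ s u = s v ∧ ¬G.IsBridge s(u, v) := by
  obtain ⟨_, w, hcycle, hodd⟩ := exists_isCycle_odd_of_not_colorable_two hG hnb
  obtain ⟨u, v, hmem, hs⟩ := exists_mem_edges_of_odd w hodd s
  exact ⟨u, v, w.adj_of_mem_edges hmem, hs, fun hb => hb.notMem_edges_of_isCycle hcycle hmem⟩

theorem connected_induce_of_dominated {K L : Set V} (hKL : K ⊆ L) (hK : (G.induce K).Connected)
    (hL : ∀ v ∈ L, v ∈ K ∨ ∃ u ∈ K, G.Adj u v) : (G.induce L).Connected := by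
  obtain ⟨r⟩ := hK.nonempty
  have hreach (v : V) (hv : v ∈ K) :
      (G.induce L).Reachable ⟨r, hKL r.2⟩ ⟨v, hKL hv⟩ :=
    (hK.preconnected r ⟨v, hv⟩).map (induceHomOfLE G hKL).toHom
  refine (connected_iff_exists_forall_reachable _).2 ⟨⟨r, hKL r.2⟩, ?_⟩
  rintro ⟨v, hv⟩
  obtain hvK | ⟨u, hu, huv⟩ := hL v hv
  · exact hreach v hvK
  · exact (hreach u hu).trans (Adj.reachable huv)

theorem connected_induce_insert {K : Set V} (hK : (G.induce K).Connected) {u v : V} (hu : u ∈ K)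
    (huv : u = v ∨ G.Adj u v) : (G.induce (insert v K)).Connected := by
  refine connected_induce_of_dominated (Set.subset_insert v K) hK ?_
  rintro w (rfl | hw)
  · exact huv.imp (by rintro rfl; exact hu) fun h => ⟨u, hu, h⟩
  · exact .inl hw

theorem exists_walk_support_subset_insert {K : Set V} (hK : (G.induce K).Connected)
    (hdom : ∀ v ∉ K, ∃ u ∈ K, G.Adj u v) {r : V} (hr : r ∈ K) (v : V) :
    ∃ p : G.Walk r v, ∀ w ∈ p.support, w ∈ insert v K := by
  have hconn : (G.induce (insert v K)).Connected := by
    refine connected_induce_of_dominated (Set.subset_insert v K) hK ?_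
    rintro w (rfl | hw)
    · exact or_iff_not_imp_left.2 (hdom w)
    · exact .inl hw
  obtain ⟨p⟩ := hconn.preconnected ⟨r, .inr hr⟩ ⟨v, .inl rfl⟩
  refine ⟨p.map (Embedding.induce _).toHom, fun w hw => ?_⟩
  obtain ⟨x, -, rfl⟩ := List.mem_map.1 ((congrArg (w ∈ ·) (Walk.support_map _ p)).mp hw)
  exact x.2

-- If the parities of walks from a root to all vertices do not give a proper colouring, two adjacent
-- vertices `u`, `v` with walks of equal parity close up to an odd walk inside `K ∪ {u, v}`.
theorem exists_pair_not_colorable_two {K : Set V} (hK : (G.induce K).Connected)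
    (hdom : ∀ v ∉ K, ∃ u ∈ K, G.Adj u v) (hnb : ¬G.Colorable 2) :
    ∃ u v, ¬(G.induce (insert u (insert v K))).Colorable 2 := by
  obtain ⟨r⟩ := hK.nonempty
  choose p hp using exists_walk_support_subset_insert hK hdom r.2
  obtain ⟨u, v, huv, hparity⟩ : ∃ u v, G.Adj u v ∧ (Even (p u).length ↔ Even (p v).length) := by
    by_contra hproper
    let c : G.Coloring Bool :=
      Coloring.mk (fun v => decide (Even (p v).length)) fun {u v} huv h =>
        hproper ⟨u, v, huv, decide_eq_decide.1 h⟩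
    exact hnb c.colorable
  refine ⟨u, v, fun hcol => ?_⟩
  have hsub : ∀ w ∈ (((p u).concat huv).append (p v).reverse).support,
      w ∈ insert u (insert v K) := by
    intro w hw
    simp only [Walk.mem_support_append_iff, Walk.support_concat, Walk.support_reverse,
      List.mem_reverse, List.mem_append, List.mem_singleton] at hw
    obtain (hw | rfl) | hw := hw
    · exact Set.insert_subset_insert (Set.subset_insert v K) (hp u w hw)
    · exact .inr (.inl rfl)
    · exact .inr (hp v w hw)
  have hodd : ¬Even (((p u).concat huv).append (p v).reverse).length := by
    rw [Walk.length_append, Walk.length_concat, Walk.length_reverse]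
    grind
  have heven := two_colorable_iff_forall_loop_even.1 hcol _
    ((((p u).concat huv).append (p v).reverse).induce _ hsub)
  rw [← Walk.length_map (Embedding.induce _).toHom, Walk.map_induce] at heven
  exact hodd heven

-- The first vertex `b` outside the closed neighbourhood of `S` on a walk towards `D \ S` is
-- dominated by a vertex of `D \ S`, which is thus at distance at most three from `S`.
theorem exists_connected_insert (hG : G.Connected) {D S K : Finset V}
    (hD : ∀ v ∉ D, ∃ u ∈ D, G.Adj u v) (hS : S.Nonempty) (hSK : S ⊆ K)
    (hK : (G.induce (K : Set V)).Connected) (hDS : (D \ S).Nonempty) :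
    ∃ d ∈ D \ S, ∃ K' : Finset V, insert d K ⊆ K' ∧ #K' ≤ #K + 3 ∧
      (G.induce (K' : Set V)).Connected := by
  obtain ⟨d₀, hd₀⟩ := hDS
  obtain ⟨s₀, hs₀⟩ := hS
  by_cases hnear : ∃ s ∈ S, s = d₀ ∨ G.Adj s d₀
  · obtain ⟨s, hs, hsd⟩ := hnear
    refine ⟨d₀, hd₀, insert d₀ K, Subset.rfl, by linarith [card_insert_le d₀ K], ?_⟩
    rw [coe_insert]
    exact connected_induce_insert hK (hSK hs) hsd
  · obtain ⟨w⟩ := hG.preconnected s₀ d₀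
    obtain ⟨⟨⟨a, b⟩, hab⟩, -, ⟨s, hs, hsa⟩, hb⟩ :=
      w.exists_boundary_dart {v | ∃ s ∈ S, s = v ∨ G.Adj s v} ⟨s₀, hs₀, .inl rfl⟩ hnear
    obtain ⟨d, hdD, hdb⟩ : ∃ d ∈ D, d = b ∨ G.Adj d b := by
      by_cases hbD : b ∈ D
      · exact ⟨b, hbD, .inl rfl⟩
      · exact (hD b hbD).imp fun d hd => ⟨hd.1, .inr hd.2⟩
    refine ⟨d, mem_sdiff.2 ⟨hdD, fun hdS => hb ⟨d, hdS, hdb⟩⟩, insert d (insert b (insert a K)),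
      insert_subset_insert d ((subset_insert a K).trans (subset_insert b _)), ?_, ?_⟩
    · linarith [card_insert_le a K, card_insert_le b (insert a K),
        card_insert_le d (insert b (insert a K))]
    · rw [coe_insert, coe_insert, coe_insert]
      exact connected_induce_insert
        (connected_induce_insert (connected_induce_insert hK (hSK hs) hsa)
          (Set.mem_insert a _) (.inr hab))
        (Set.mem_insert b _) (hdb.imp Eq.symm Adj.symm)

theorem exists_connected_superset (hG : G.Connected) {D : Finset V} (hDne : D.Nonempty)
    (hD : ∀ v ∉ D, ∃ u ∈ D, G.Adj u v) :
    ∃ K : Finset V, D ⊆ K ∧ #K + 2 ≤ 3 * #D ∧ (G.induce (K : Set V)).Connected := by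
  suffices h : ∀ m, 1 ≤ m → m ≤ #D → ∃ S K : Finset V, S ⊆ D ∧ #S = m ∧ S ⊆ K ∧
      #K + 2 ≤ 3 * m ∧ (G.induce (K : Set V)).Connected by
    obtain ⟨S, K, hSD, hS, hSK, hcard, hK⟩ := h #D hDne.card_pos le_rfl
    exact ⟨K, eq_of_subset_of_card_le hSD hS.ge ▸ hSK, hcard, hK⟩
  intro m hm
  induction m, hm using Nat.le_induction with
  | base =>
    obtain ⟨d, hd⟩ := hDne
    refine fun _ => ⟨{d}, {d}, singleton_subset_iff.2 hd, card_singleton d, Subset.rfl, by simp, ?_⟩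
    rw [coe_singleton]
    rw [induce_singleton_eq_top]
    exact connected_top
  | succ m hm ih =>
    intro hmD
    obtain ⟨S, K, hSD, hS, hSK, hcard, hK⟩ := ih (by omega)
    have hDS : (D \ S).Nonempty := sdiff_nonempty.2 fun hDS => by linarith [card_le_card hDS]
    obtain ⟨d, hd, K', hKK', hcard', hK'⟩ :=
      exists_connected_insert hG hD (card_pos.1 (by omega)) hSK hK hDS
    obtain ⟨hdD, hdS⟩ := mem_sdiff.1 hd
    exact ⟨insert d S, K', insert_subset hdD hSD, by rw [card_insert_of_notMem hdS, hS],
      (insert_subset_insert d hSK).trans hKK', by omega, hK'⟩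

theorem IsDominatingSet.mono [Fintype V] {D K : Finset V} (hD : IsDominatingSet G D)
    (hDK : D ⊆ K) : IsDominatingSet G K :=
  fun v hv => (hD v fun hvD => hv (hDK hvD)).imp fun _ hu => ⟨hDK hu.1, hu.2⟩

theorem exists_connected_nonbipartite_superset [Fintype V] (hG : G.Connected)
    (hnb : ¬G.Colorable 2) {D : Finset V} (hD : IsDominatingSet G D) {m : ℕ} (hDm : 3 * #D ≤ m)
    (hm : m ≤ Fintype.card V) :
    ∃ K : Finset V, D ⊆ K ∧ #K = m ∧ (G.induce (K : Set V)).Connected ∧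
      ¬(G.induce (K : Set V)).Colorable 2 := by
  have hDne : D.Nonempty := by
    obtain ⟨v⟩ := hG.nonempty
    by_cases hv : v ∈ D
    · exact ⟨v, hv⟩
    · exact (hD v hv).imp fun _ h => h.1
  obtain ⟨K₀, hDK₀, hcard, hK₀⟩ := exists_connected_superset hG hDne hD
  obtain ⟨u, v, huv⟩ := exists_pair_not_colorable_two hK₀ (hD.mono hDK₀) hnb
  obtain ⟨K, hK₀K, hK⟩ := exists_superset_card_eq (s := insert u (insert v K₀)) (n := m)
    (by linarith [card_insert_le v K₀, card_insert_le u (insert v K₀)]) hm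
  have hsub : K₀ ⊆ K := ((subset_insert v K₀).trans (subset_insert u _)).trans hK₀K
  refine ⟨K, hDK₀.trans hsub, hK, ?_, fun hcol => huv ?_⟩
  · exact connected_induce_of_dominated (coe_subset.2 hsub) hK₀
      fun v _ => or_iff_not_imp_left.2 (hD.mono hDK₀ v)
  · exact hcol.of_hom (induceHomOfLE G (by simpa using coe_subset.2 hK₀K)).toHom

theorem exists_isDominatingSet_card_eq_dominationNumber [Fintype V] (G : SimpleGraph V) :
    ∃ D : Finset V, IsDominatingSet G D ∧ #D = dominationNumber G :=
  Nat.sInf_mem (s := {k | ∃ D, IsDominatingSet G D ∧ #D = k})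
    ⟨_, univ, fun v hv => absurd (mem_univ v) hv, rfl⟩

end Core

section CoreLabelling

open SimpleGraph

variable {V : Type*} {G : SimpleGraph V} {n : ℕ}

theorem exists_equiv_fin_sortedOn [Fintype V] (hn : Fintype.card V = n) (K : Finset V)
    (y : V → ℝ) :
    ∃ ℓ : V ≃ Fin n, (∀ v, v ∈ K ↔ (ℓ v : ℕ) < #K) ∧
      ∀ u ∈ K, ∀ v ∈ K, ℓ u ≤ ℓ v → y u ≤ y v := by
  -- Vertices outside `K` get the key `⊤`, so that sorting by the key puts `K` first.
  let key : V → WithTop ℝ := fun v => if v ∈ K then (y v : WithTop ℝ) else ⊤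
  let ℓ₀ : V ≃ Fin n := Fintype.equivFinOfCardEq hn
  let ℓ : V ≃ Fin n := ℓ₀.trans (Tuple.sort (key ∘ ℓ₀.symm)).symm
  have hmono : Monotone (key ∘ ℓ.symm) := Tuple.monotone_sort (key ∘ ℓ₀.symm)
  have hkey (v : V) : key v < ⊤ ↔ v ∈ K := by
    by_cases hv : v ∈ K <;> simp [key, hv, WithTop.coe_lt_top]
  have hcard : #{i | (key ∘ ℓ.symm) i < ⊤} = #K := by
    rw [← card_map ℓ.toEmbedding]
    congr 1
    ext i
    simp [hkey]
  refine ⟨ℓ, fun v => ?_, fun u hu v hv huv => ?_⟩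
  · rw [← hcard, Tuple.lt_card_lt_iff_apply_lt_of_monotone hmono, Function.comp_apply,
      ℓ.symm_apply_apply, hkey]
  · simpa [key, hu, hv] using hmono huv

theorem crossesEveryCut_labelledEdges_erase [Fintype V] {ℓ : V ≃ Fin n} {K : Finset V} {N : ℕ}
    (hℓ : ∀ v, v ∈ K ↔ (ℓ v : ℕ) < N) (hNn : N ≤ n) (hK : (G.induce (K : Set V)).Connected)
    {a b : (K : Set V)} (hab : ¬(G.induce (K : Set V)).IsBridge s(a, b)) :
    CrossesEveryCut N
      (((labelledEdges G ℓ).filter fun p => p.2 < N).erase (↑(ℓ a), ↑(ℓ b))) := by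
  rintro S ⟨i, hiN, hiS⟩ ⟨j, hjN, hjS⟩
  have hmem {k : ℕ} (hk : k < N) : ℓ.symm ⟨k, hk.trans_le hNn⟩ ∈ (K : Set V) := by
    simpa [hℓ] using hk
  obtain ⟨w⟩ := (hK.connected_delete_edge_of_not_isBridge hab).preconnected
    ⟨_, hmem hiN⟩ ⟨_, hmem hjN⟩
  obtain ⟨⟨⟨u, v⟩, huv⟩, -, hu, hv⟩ :=
    w.exists_boundary_dart {x | (ℓ x : ℕ) ∈ S} (by simpa using hiS) (by simpa using hjS)
  simp only [Set.mem_ofPred_eq] at hu hv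
  obtain ⟨hadj, hne⟩ := deleteEdges_adj.1 huv
  rw [Set.mem_singleton_iff, Sym2.eq_iff, not_or] at hne
  have hcross {x y : (K : Set V)} (hxy : G.Adj x y) (hlt : ℓ x < ℓ y) (hxa : ¬(x = a ∧ y = b)) :
      ((ℓ x : ℕ), (ℓ y : ℕ)) ∈
        ((labelledEdges G ℓ).filter fun p => p.2 < N).erase (↑(ℓ a), ↑(ℓ b)) := by
    refine mem_erase.2 ⟨?_, mem_filter.2 ⟨mem_labelledEdges.2 ⟨hxy, hlt⟩, (hℓ y).1 y.2⟩⟩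
    simpa [Fin.val_inj, Subtype.val_inj] using hxa
  rcases lt_or_gt_of_ne (ℓ.injective.ne (G.ne_of_adj hadj)) with hlt | hlt
  · exact ⟨_, hcross hadj hlt hne.1, by simp [hu, hv]⟩
  · exact ⟨_, hcross hadj.symm hlt fun h => hne.2 h.symm, by simp [hu, hv]⟩

theorem exists_mem_labelledEdges_crossesEveryCut_erase [Fintype V] {ℓ : V ≃ Fin n} {K : Finset V}
    {N : ℕ} (hℓ : ∀ v, v ∈ K ↔ (ℓ v : ℕ) < N) (hNn : N ≤ n)
    (hK : (G.induce (K : Set V)).Connected) (hnb : ¬(G.induce (K : Set V)).Colorable 2)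
    (X : ℕ → ℝ) :
    ∃ e ∈ (labelledEdges G ℓ).filter fun p => p.2 < N, 0 ≤ X e.1 * X e.2 ∧
      CrossesEveryCut N (((labelledEdges G ℓ).filter fun p => p.2 < N).erase e) := by
  obtain ⟨a, b, hab, hsign, hbridge⟩ :=
    exists_adj_eq_not_isBridge hK hnb fun v => decide (0 ≤ X (ℓ v))
  wlog hlt : ℓ a < ℓ b generalizing a b
  · refine this b a hab.symm hsign.symm (by rwa [Sym2.eq_swap]) ?_
    exact (le_of_not_gt hlt).lt_of_ne (ℓ.injective.ne (Subtype.val_injective.ne hab.ne'))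
  refine ⟨_, mem_filter.2 ⟨mem_labelledEdges.2 ⟨hab, hlt⟩, (hℓ b).1 b.2⟩, ?_,
    crossesEveryCut_labelledEdges_erase hℓ hNn hK hbridge⟩
  rcases le_or_gt 0 (X (ℓ a)) with ha | ha
  · exact mul_nonneg ha ((decide_eq_decide.1 hsign).1 ha)
  · exact mul_nonneg_of_nonpos_of_nonpos ha.le
      (le_of_not_ge fun hb => ha.not_ge ((decide_eq_decide.1 hsign).2 hb))

theorem three_le_card_of_not_colorable_two [Fintype V] (hnb : ¬G.Colorable 2) :
    3 ≤ Fintype.card V := by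
  by_contra! hcard
  exact hnb ((colorable_of_fintype G).mono (Nat.le_of_lt_succ hcard))

theorem exists_isCoreLabelling [Fintype V] (hn : Fintype.card V = n) {K : Finset V}
    (hK : (G.induce (K : Set V)).Connected) (hnb : ¬(G.induce (K : Set V)).Colorable 2)
    (hdom : IsDominatingSet G K) (x : V → ℝ) :
    ∃ (ℓ : V ≃ Fin n) (X : ℕ → ℝ) (c : ℕ → ℕ) (e : ℕ × ℕ), (∀ v, X (ℓ v) = x v) ∧
      IsCoreLabelling n #K (labelledEdges G ℓ) X c e := by
  obtain ⟨ℓ, hℓ, hsorted⟩ := exists_equiv_fin_sortedOn hn K fun v => |x v|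
  have hKn : #K ≤ n := (card_le_univ K).trans_eq hn
  have hmem {k : ℕ} (hk : k < #K) : ℓ.symm ⟨k, hk.trans_le hKn⟩ ∈ K := by simpa [hℓ] using hk
  let X : ℕ → ℝ := Function.extend (fun v => (ℓ v : ℕ)) x 0
  have hX (v : V) : X (ℓ v) = x v :=
    (Fin.val_injective.comp ℓ.injective).extend_apply x 0 v
  have hX' (k : ℕ) (hk : k < n) : X k = x (ℓ.symm ⟨k, hk⟩) := by simp [← hX]
  obtain ⟨e, he, hsign, hcross⟩ := exists_mem_labelledEdges_crossesEveryCut_erase hℓ hKn hK hnb X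
  have hparent (j : ℕ) :
      ∃ i, #K ≤ j → j < n → i < #K ∧ (i, j) ∈ labelledEdges G ℓ := by
    by_cases hj : #K ≤ j ∧ j < n
    · obtain ⟨u, hu, huv⟩ := hdom (ℓ.symm ⟨j, hj.2⟩) (by simpa [hℓ] using hj.1)
      have huK := (hℓ u).1 hu
      refine ⟨ℓ u, fun _ _ => ⟨huK, ?_⟩⟩
      have hlt : ℓ u < ℓ (ℓ.symm ⟨j, hj.2⟩) := by
        rw [ℓ.apply_symm_apply]
        exact huK.trans_le hj.1
      have hmem := mem_labelledEdges.2 ⟨huv, hlt⟩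
      rwa [ℓ.apply_symm_apply] at hmem
    · exact ⟨0, fun h₁ h₂ => absurd ⟨h₁, h₂⟩ hj⟩
  choose c hc using hparent
  exact ⟨ℓ, X, c, e, hX,
    { three_le := (three_le_card_of_not_colorable_two hnb).trans_eq (Fintype.card_coe K)
      le_card := hKn
      lt_of_mem := fun p => lt_of_mem_labelledEdges
      monotoneOn := fun i hi j hj hij => by
        simp only [hX' i (hi.trans_le hKn), hX' j (hj.trans_le hKn)]
        exact hsorted _ (hmem hi) _ (hmem hj) (by simpa using hij)
      edge_mem := he
      edge_sign := hsign
      crosses := hcross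
      parent_lt := fun j h₁ h₂ => (hc j h₁ h₂).1
      parent_mem := fun j h₁ h₂ => (hc j h₁ h₂).2 }⟩

theorem qmin_Cstar_le_of_core [Fintype V] (hn : Fintype.card V = n) (hn4 : 4 ≤ n) {K : Finset V}
    (hK : (G.induce (K : Set V)).Connected) (hnb : ¬(G.induce (K : Set V)).Colorable 2)
    (hdom : IsDominatingSet G K) :
    qmin (Cstar n 3 (#K - 3)) ≤ qmin G ∧
      (qmin (Cstar n 3 (#K - 3)) = qmin G → Nonempty (G ≃g Cstar n 3 (#K - 3))) := by
  have : Nonempty V := Fintype.card_pos_iff.1 (by omega)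
  obtain ⟨x, hx, hQx⟩ := (posSemidef_sub_qmin_and_exists_eigenvector G).2
  obtain ⟨ℓ, X, c, e, hX, h⟩ := exists_isCoreLabelling hn hK hnb hdom x
  obtain rfl : (fun v => X (ℓ v)) = x := funext hX
  have hform : ∑ p ∈ labelledEdges G ℓ, (X p.1 + X p.2) ^ 2 =
      qmin G * ∑ k ∈ range n, X k * X k := by
    simp only [sq]
    rw [← sum_labelledEdges, hQx, dotProduct_smul, dotProduct_comp_equiv, smul_eq_mul]
  have hne : ∃ k < n, X k ≠ 0 := by
    obtain ⟨v, hv⟩ := Function.ne_iff.1 hx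
    exact ⟨ℓ v, (ℓ v).2, hv⟩
  obtain ⟨hle, heq⟩ := h.qmin_Cstar_le_and_eq_cometEdges hn4 hform hne
  exact ⟨hle, fun hq => nonempty_iso_of_labelledEdges_eq
    ((heq hq.symm).trans (labelledEdges_Cstar h.three_le h.le_card).symm)⟩

theorem eq_top_of_not_colorable_two_of_card_eq_three [Fintype V] (hV : Fintype.card V = 3)
    (hnb : ¬G.Colorable 2) : G = ⊤ := by
  refine eq_top_of_chromaticNumber_eq_card (chromaticNumber_le_card.antisymm ?_)
  rw [hV]
  exact Order.add_one_le_of_lt (not_le.1 (mt chromaticNumber_le_iff_colorable.1 hnb))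

theorem Cstar_three_three_zero : Cstar 3 3 0 = ⊤ := by
  ext i j
  fin_cases i <;> fin_cases j <;> simp [Cstar, cstarRel]

end CoreLabelling

theorem qmin_Cstar_min_large_general {V : Type*} [Fintype V] {γ n : ℕ} (hn : 3 * γ ≤ n)
    {G : SimpleGraph V} (hcard : Fintype.card V = n) (hconn : G.Connected)
    (hnonbip : ¬G.Colorable 2) (hdom : dominationNumber G ≤ γ) :
    qmin (Cstar n 3 (3 * γ - 3)) ≤ qmin G ∧
      (qmin (Cstar n 3 (3 * γ - 3)) = qmin G ↔ Nonempty (G ≃g Cstar n 3 (3 * γ - 3))) := by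
  suffices h : qmin (Cstar n 3 (3 * γ - 3)) ≤ qmin G ∧
      (qmin (Cstar n 3 (3 * γ - 3)) = qmin G → Nonempty (G ≃g Cstar n 3 (3 * γ - 3))) from
    ⟨h.1, h.2, fun ⟨e⟩ => (qmin_congr e).symm⟩
  obtain rfl | hn4 : n = 3 ∨ 4 ≤ n := by
    have := three_le_card_of_not_colorable_two hnonbip
    omega
  · obtain rfl := eq_top_of_not_colorable_two_of_card_eq_three hcard hnonbip
    rw [show 3 * γ - 3 = 0 by omega, Cstar_three_three_zero]
    let e := SimpleGraph.Iso.completeGraph (Fintype.equivFinOfCardEq hcard)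
    exact ⟨(qmin_congr e).ge, fun _ => ⟨e⟩⟩
  · obtain ⟨D, hD, hDcard⟩ := exists_isDominatingSet_card_eq_dominationNumber G
    obtain ⟨K, hDK, hK, hKconn, hKnb⟩ := exists_connected_nonbipartite_superset hconn hnonbip hD
      (m := 3 * γ) (by omega) (hn.trans_eq hcard.symm)
    rw [← hK]
    exact qmin_Cstar_le_of_core hcard hn4 hKconn hKnb (hD.mono hDK)

/-- For `n ≥ 3γ + 2` (`γ ≥ 1`), among all connected nonbipartite graphs of order `n`
with domination number `γ`, the least `Q`-eigenvalue is minimized uniquely by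
`C*_{3,3γ-3}`. -/
theorem qmin_Cstar_min_large
    {V : Type*} [Fintype V] (γ n : ℕ) (hγ : 1 ≤ γ) (hn : 3 * γ + 2 ≤ n)
    (G : SimpleGraph V) (hcard : Fintype.card V = n)
    (hconn : G.Connected) (hnonbip : ¬ G.Colorable 2)
    (hdom : dominationNumber G = γ) :
    qmin (Cstar n 3 (3 * γ - 3)) ≤ qmin G ∧
      (qmin (Cstar n 3 (3 * γ - 3)) = qmin G ↔ Nonempty (G ≃g Cstar n 3 (3 * γ - 3))) :=
  qmin_Cstar_min_large_general (by omega) hcard hconn hnonbip hdom.le
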